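/- arXiv:math/9503228 — 2 statements merged into one kernel-verified Lean document; each statement's English description precedes it below -/
import Mathlib

section
/- Let H : ℝ² → ℝ be smooth, compactly supported, with H ≥ 0 and max H = m > 0, and suppose H has no non-constant closed trajectory in time less than 1. Then the Gromov capacities of the regions under and over the graph of H equal ‖H‖ = m; concretely, for every ε with 0 < ε < m there exist symplectic embeddings of the open ball B⁴(m − ε) into R_H^- = {(x,s,t) ∈ ℝ²×ℝ×[0,1] : 0 ≤ s ≤ H(x)} and into R_H^+ = {(x,s,t) ∈ ℝ²×ℝ×[0,1] : H(x) ≤ s ≤ m}, both regarded as subsets of ℝ⁴ = ℝ²×ℝ² with the symplectic form dx∧dy ⊕ ds∧dt. -/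
/-!
The embeddings are products `(z₁, z₂) ↦ (g z₁, k z₂)` of area-preserving maps of the plane, where
`k` takes values in the `(s, t)`-plane. Fix a small `η`. The map `k` sends a point `z₂` into
`(0, π|z₂|² + 2η) × (0, 1)` (`exists_strip`). Over the graph it is enough to take for `g` a
translation that moves the ball off the support of `H`. Under the graph, `g` has to satisfy
`H (g z₁) > m - π|z₁|² - 2η` (`exists_high`): then `s < π|z₂|² + 2η < H (g z₁)` because
`π|z₁|² + π|z₂|² < m - 4η`.

Both `g` and `k` come from `exists_nested_embedding`: given connected open sets
`V 0 ⊆ V 1 ⊆ ⋯` of the plane, a single map of Jacobian one carries the disc of area `A i` about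
the origin into `V i` for finitely many `i`, provided `A i < area (V i)`. To see this, first find a
diffeomorphism `θ` mapping concentric discs into the `V i` with images of area more than `A i`
(`exists_nest`, by engulfing finitely many balls), then replace it by a map of Jacobian one that
has the same images of concentric discs, up to a change of their radii; it is the Knothe
rearrangement in polar coordinates (`exists_knothe`), which matches the areas of the images of
discs radius by radius and then the angular distribution of area on
each circle.

For `g` the sets `V j` are the components of `{H > m - (j + 2)η}` around a maximum point, and what
remains is that the component of `{H > c}` has area at least `m - c` (`le_volume_component`). By the
one-dimensional Sard theorem along a ray, at almost every level `s ∈ (c, m)` the component contains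
a regular point; the Hamiltonian trajectory through it is injective on `[0, 1)` by the hypothesis on
closed orbits. The layer `|H - s| < δ` around this trajectory has area at least about `2δ`
(`exists_layer`), so that the image under `H` of the area measure of the component has density at
least one at `s`. Integrating the density over `(c, m)` gives the bound.
-/

open Set

noncomputable section

/-- `ℝ^{2n}`, written as pairs consisting of the `n` x-coordinates and the `n` y-coordinates. -/
abbrev Esp (n : ℕ) : Type := (Fin n → ℝ) × (Fin n → ℝ)

/-- The standard symplectic form `ω₀ = Σ dxᵢ ∧ dyᵢ` on `ℝ^{2n}`. -/
def omega0 {n : ℕ} (v w : Esp n) : ℝ := ∑ i, (v.1 i * w.2 i - v.2 i * w.1 i)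

/-- The Hamiltonian vector field `X_H = J ∇H`, i.e. `X_H = (-∂H/∂y, ∂H/∂x)`. -/
def hamVF {n : ℕ} (H : Esp n → ℝ) (p : Esp n) : Esp n :=
  (fun i => - (fderiv ℝ H p) (0, Pi.single i 1),
   fun i => (fderiv ℝ H p) (Pi.single i 1, 0))

/-- Total variation `sup H - inf H`. -/
def totVar {n : ℕ} (F : Esp n → ℝ) : ℝ := sSup (Set.range F) - sInf (Set.range F)

/-- Hofer length `L(H) = ∫₀¹ (sup_x H_t - inf_x H_t) dt`. -/
def hoferLength {n : ℕ} (H : ℝ → Esp n → ℝ) : ℝ := ∫ t in (0:ℝ)..1, totVar (H t)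

/-- Support of a time-dependent Hamiltonian lies in a fixed compact set. -/
def IsCompactlySupported {n : ℕ} (H : ℝ → Esp n → ℝ) : Prop :=
  ∃ C : Set (Esp n), IsCompact C ∧ ∀ t x, x ∉ C → H t x = 0

/-- `φ` is the Hamiltonian isotopy generated by `H`. -/
def IsHamIsotopyOf {n : ℕ} (H : ℝ → Esp n → ℝ) (φ : ℝ → Esp n → Esp n) : Prop :=
  (∀ x, φ 0 x = x) ∧ ∀ x t, HasDerivAt (fun s => φ s x) (hamVF (H t) (φ t x)) t

/-- The projection `ℝ⁴ = ℝ² × ℝ² → ℝ²` (first pair of coordinates `(x,y)`; the second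
`ℝ²`-factor carries the coordinates `(s,t)`). -/
def projE {n : ℕ} (p : Esp (n+1)) : Esp n :=
  (fun i => p.1 i.castSucc, fun i => p.2 i.castSucc)

/-- The open round ball in `ℝ^{2m}` of capacity `a` (radius `√(a/π)`), centered at `0`. -/
def openBallCap (m : ℕ) (a : ℝ) : Set (Esp m) :=
  {p | Real.pi * (∑ i, ((p.1 i)^2 + (p.2 i)^2)) < a}

/-- `f` is a symplectic embedding on the set `A`. -/
def IsSymplecticEmbeddingOn {m : ℕ} (f : Esp m → Esp m) (A : Set (Esp m)) : Prop :=
  Set.InjOn f A ∧ ∀ p ∈ A, DifferentiableAt ℝ f p ∧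
    ∀ v w, omega0 (fderiv ℝ f p v) (fderiv ℝ f p w) = omega0 v w

open MeasureTheory Metric Filter Topology
open scoped ContDiff ENNReal NNReal

/-! ### Diffeomorphisms of the plane and engulfing -/

/-- The group of `C^∞` diffeomorphisms of the plane, as a subgroup of its permutations. -/
def diffGroup : Subgroup (Equiv.Perm (ℝ × ℝ)) where
  carrier := {e | ContDiff ℝ ∞ e ∧ ContDiff ℝ ∞ e.symm}
  mul_mem' := fun ha hb => ⟨ha.1.comp hb.1, hb.2.comp ha.2⟩
  one_mem' := ⟨contDiff_id, contDiff_id⟩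
  inv_mem' := fun ha => ⟨ha.2, ha.1⟩

/-- A perturbation of the identity by a smooth map with Lipschitz constant less than one is a
diffeomorphism. -/
lemma exists_diff_perturb (u : ℝ × ℝ → ℝ × ℝ) (hu : ContDiff ℝ ∞ u)
    (hl : LipschitzWith (1 / 2) u) : ∃ e ∈ diffGroup, ∀ z, e z = z + u z := by
  have happ : ApproximatesLinearOn (fun z => z + u z)
      ((ContinuousLinearEquiv.refl ℝ (ℝ × ℝ) : (ℝ × ℝ) ≃L[ℝ] (ℝ × ℝ)) :
        (ℝ × ℝ) →L[ℝ] (ℝ × ℝ)) univ (1 / 2) := by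
    intro x _ y _
    have := hl.dist_le_mul x y
    rw [dist_eq_norm, dist_eq_norm] at this
    have h : (x + u x) - (y + u y) - (x - y) = u x - u y := by abel
    change ‖(x + u x) - (y + u y) - (x - y)‖ ≤ _
    rwa [h]
  have hc : Subsingleton (ℝ × ℝ) ∨ (1 / 2 : ℝ≥0) <
      ‖(((ContinuousLinearEquiv.refl ℝ (ℝ × ℝ)).symm : (ℝ × ℝ) ≃L[ℝ] (ℝ × ℝ)) :
        (ℝ × ℝ) →L[ℝ] (ℝ × ℝ))‖₊⁻¹ := by
    right
    have : ‖(((ContinuousLinearEquiv.refl ℝ (ℝ × ℝ)).symm : (ℝ × ℝ) ≃L[ℝ] (ℝ × ℝ)) :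
        (ℝ × ℝ) →L[ℝ] (ℝ × ℝ))‖₊ = 1 := by
      ext
      simp
    rw [this, inv_one, ← NNReal.coe_lt_coe]
    norm_num
  let f := happ.toHomeomorph _ hc
  have hf : ∀ z, f z = z + u z := fun z => rfl
  have hsm : ContDiff ℝ ∞ f := contDiff_id.add hu
  have hinj : ∀ a : ℝ × ℝ, Function.Injective
      (((ContinuousLinearMap.id ℝ (ℝ × ℝ)) + fderiv ℝ u a : (ℝ × ℝ) →L[ℝ] (ℝ × ℝ)) :
        (ℝ × ℝ) →ₗ[ℝ] (ℝ × ℝ)) := by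
    intro a
    rw [← LinearMap.ker_eq_bot, LinearMap.ker_eq_bot']
    intro v hv
    have h1 : v + fderiv ℝ u a v = 0 := hv
    have h2 : ‖fderiv ℝ u a v‖ ≤ (1 / 2) * ‖v‖ := by
      refine ((fderiv ℝ u a).le_opNorm v).trans ?_
      have := norm_fderiv_le_of_lipschitz ℝ hl (x₀ := a)
      gcongr
      simpa using this
    have h3 : ‖v‖ = ‖fderiv ℝ u a v‖ :=
      (congrArg norm (eq_neg_of_add_eq_zero_left h1)).trans (norm_neg _)
    have : ‖v‖ = 0 := by linarith [norm_nonneg v]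
    exact norm_eq_zero.1 this
  let f' : ∀ a : ℝ × ℝ, (ℝ × ℝ) ≃L[ℝ] (ℝ × ℝ) := fun a =>
    (LinearEquiv.ofInjectiveEndo _ (hinj a)).toContinuousLinearEquiv
  have hd : ∀ a, HasFDerivAt f ((f' a : (ℝ × ℝ) →L[ℝ] (ℝ × ℝ))) a := by
    intro a
    have h := (hasFDerivAt_id (𝕜 := ℝ) a).add
      ((hu.differentiable (by simp)) a).hasFDerivAt
    have h' : (f' a : (ℝ × ℝ) →L[ℝ] (ℝ × ℝ)) =
        ContinuousLinearMap.id ℝ (ℝ × ℝ) + fderiv ℝ u a := ContinuousLinearMap.ext fun v => rfl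
    rw [h']
    exact h
  exact ⟨f.toEquiv, ⟨hsm, f.contDiff_symm hd hsm⟩, hf⟩

/-- Small multiples of a compactly supported smooth vector field displace the plane by a
diffeomorphism. -/
lemma exists_diff_smul (w : ℝ × ℝ → ℝ × ℝ) (hw : ContDiff ℝ ∞ w) (hc : HasCompactSupport w) :
    ∃ ε₀ > 0, ∀ ε : ℝ, |ε| ≤ ε₀ → ∃ e ∈ diffGroup, ∀ z, e z = z + ε • w z := by
  obtain ⟨C, hC⟩ := hw.lipschitzWith_of_hasCompactSupport hc (by simp)
  refine ⟨1 / (2 * (C + 1)), by positivity, fun ε hε => ?_⟩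
  refine exists_diff_perturb (fun z => ε • w z) (hw.const_smul ε) ?_
  refine LipschitzWith.of_dist_le_mul fun x y => ?_
  have h1 := hC.dist_le_mul x y
  rw [dist_smul₀, Real.norm_eq_abs]
  have hC0 : (0 : ℝ) ≤ C := C.2
  have h2 : |ε| * C ≤ 1 / 2 := by
    calc |ε| * C ≤ 1 / (2 * (C + 1)) * C := by gcongr
      _ ≤ 1 / 2 := by
        rw [div_mul_eq_mul_div, div_le_div_iff₀ (by positivity) (by norm_num)]; nlinarith
  calc |ε| * dist (w x) (w y) ≤ |ε| * (C * dist x y) := by gcongr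
    _ = (|ε| * C) * dist x y := by ring
    _ ≤ (1 / 2) * dist x y := by gcongr
    _ = _ := by simp

/-- A point can be moved to any sufficiently close point by a diffeomorphism supported in a
prescribed neighbourhood. -/
lemma exists_diff_push {y : ℝ × ℝ} {O : Set (ℝ × ℝ)} (hO : O ∈ 𝓝 y) :
    ∀ᶠ y' in 𝓝 y, ∃ e ∈ diffGroup, e y = y' ∧ ∀ z ∉ O, e z = z := by
  obtain ⟨b, hbs, hbc, hb, -, hb1⟩ := exists_contDiff_tsupport_subset (n := ⊤) hO
  obtain ⟨C, hC⟩ := hb.lipschitzWith_of_hasCompactSupport hbc (by simp)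
  have hC0 : (0 : ℝ) ≤ C := C.2
  filter_upwards [ball_mem_nhds y (show 0 < 1 / (2 * ((C : ℝ) + 1)) by positivity)] with y' hy'
  obtain ⟨e, he, hez⟩ := exists_diff_perturb (fun z => b z • (y' - y))
    (hb.smul contDiff_const) (by
      refine LipschitzWith.of_dist_le_mul fun p q => ?_
      have h1 := hC.dist_le_mul p q
      rw [dist_eq_norm, ← sub_smul, norm_smul, ← dist_eq_norm, ← dist_eq_norm]
      have h2 : C * dist y' y ≤ 1 / 2 := by
        calc C * dist y' y ≤ C * (1 / (2 * (C + 1))) := by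
              gcongr; exact (mem_ball.1 hy').le
          _ ≤ 1 / 2 := by
            rw [mul_one_div, div_le_div_iff₀ (by positivity) (by norm_num)]; nlinarith
      calc dist (b p) (b q) * dist y' y ≤ (C * dist p q) * dist y' y := by gcongr
        _ = (C * dist y' y) * dist p q := by ring
        _ ≤ (1 / 2) * dist p q := by gcongr
        _ = _ := by simp)
  refine ⟨e, he, by rw [hez, hb1]; simp, fun z hz => ?_⟩
  have : b z = 0 := by
    by_contra h
    exact hz (hbs (subset_tsupport _ h))
  rw [hez, this]; simp

/-- A closed ball can be squeezed into an arbitrarily small ball about its centre by a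
diffeomorphism supported in a prescribed neighbourhood: iterate a slight contraction. -/
lemma exists_diff_shrink {x : ℝ × ℝ} {r : ℝ} (hr : 0 < r) {O : Set (ℝ × ℝ)} (hO : IsOpen O)
    (hB : closedBall x r ⊆ O) {ρ : ℝ} (hρ : 0 < ρ) :
    ∃ e ∈ diffGroup, (∀ z ∈ closedBall x r, e z ∈ ball x ρ) ∧ ∀ z ∉ O, e z = z := by
  obtain ⟨δ, hδ, hδO⟩ := (isCompact_closedBall x r).exists_thickening_subset_open hO hB
  rw [thickening_closedBall hδ hr.le] at hδO
  let b : ContDiffBump x := ⟨r, δ + r, hr, by linarith⟩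
  obtain ⟨ε₀, hε₀, h⟩ := exists_diff_smul (fun z => b z • (z - x))
    (b.contDiff.smul (contDiff_id.sub contDiff_const)) (b.hasCompactSupport.smul_right)
  obtain ⟨e, he, hez⟩ := h (-(min ε₀ (1 / 2))) (by
    rw [abs_neg, abs_of_pos (by positivity)]; exact min_le_left _ _)
  set q : ℝ := 1 - min ε₀ (1 / 2) with hq
  have hm0 : 0 < min ε₀ (1 / 2) := by positivity
  have hq0 : 0 ≤ q := by
    have := min_le_right ε₀ (1 / 2 : ℝ)
    linarith
  have hq1 : q < 1 := by linarith
  have hstep : ∀ z ∈ closedBall x r, e z - x = q • (z - x) := by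
    intro z hz
    rw [hez, b.one_of_mem_closedBall hz, hq, sub_smul]
    module
  have hiter : ∀ n : ℕ, ∀ z ∈ closedBall x r, (e ^ n) z - x = q ^ n • (z - x) := by
    intro n
    induction n with
    | zero => intro z _; simp
    | succ n ih =>
      intro z hz
      have hmem : (e ^ n) z ∈ closedBall x r := by
        rw [mem_closedBall, dist_eq_norm, ih z hz, norm_smul]
        rw [mem_closedBall, dist_eq_norm] at hz
        have : ‖q ^ n‖ ≤ 1 := by
          rw [norm_pow, Real.norm_eq_abs, abs_of_nonneg hq0]; exact pow_le_one₀ hq0 hq1.le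
        nlinarith [norm_nonneg (z - x), norm_nonneg (q ^ n)]
      rw [pow_succ', Equiv.Perm.mul_apply, hstep _ hmem, ih z hz, smul_smul, pow_succ']
  obtain ⟨n, hn⟩ := exists_pow_lt_of_lt_one (show 0 < ρ / r by positivity) hq1
  refine ⟨e ^ n, diffGroup.pow_mem he n, fun z hz => ?_, fun z hz => ?_⟩
  · rw [mem_ball, dist_eq_norm, hiter n z hz, norm_smul, norm_pow, Real.norm_eq_abs,
      abs_of_nonneg hq0]
    rw [mem_closedBall, dist_eq_norm] at hz
    calc q ^ n * ‖z - x‖ ≤ q ^ n * r := by gcongr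
      _ < ρ := by rwa [lt_div_iff₀ hr] at hn
  · have h0 : b z = 0 := by
      by_contra h0
      have : z ∈ Function.support b := h0
      rw [b.support_eq] at this
      exact hz (hδO this)
    have h1 : e z = z := by rw [hez, h0]; simp
    have h2 : Function.IsFixedPt e z := h1
    have h3 := h2.iterate n
    rwa [Equiv.Perm.iterate_eq_pow] at h3

/-- A point of a connected open set can be dragged into `U₀` without moving `K` or leaving `V`,
and while keeping the closed set `F ⊆ U₀` inside `U₀`: the points that can be dragged form an
open and relatively closed subset of `V`. -/
lemma engulf_point {V U₀ K F : Set (ℝ × ℝ)} (hV : IsOpen V) (hVc : IsPreconnected V)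
    (hU : IsOpen U₀) (hUV : U₀ ⊆ V) (hUne : U₀.Nonempty) (hKF : K ⊆ F) (hF : IsClosed F)
    (hFU : F ⊆ U₀) {y : ℝ × ℝ} (hy : y ∈ V) :
    ∃ h ∈ diffGroup, (∀ z ∈ K, h z = z) ∧ (∀ z ∉ V, h z = z) ∧ (∀ z ∈ F, h z ∈ U₀) ∧
      h y ∈ U₀ := by
  let E : Set (ℝ × ℝ) := {y | ∃ h ∈ diffGroup, (∀ z ∈ K, h z = z) ∧ (∀ z ∉ V, h z = z) ∧
    (∀ z ∈ F, h z ∈ U₀) ∧ h y ∈ U₀}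
  have hEo : IsOpen E := by
    rw [isOpen_iff_mem_nhds]
    rintro y ⟨h, hh, h1, h2, h3, h4⟩
    filter_upwards [(hU.preimage hh.1.continuous).mem_nhds h4] with y' hy'
    exact ⟨h, hh, h1, h2, h3, hy'⟩
  have hUE : ∀ y ∈ U₀, y ∈ E := fun y hy =>
    ⟨1, diffGroup.one_mem, fun _ _ => rfl, fun _ _ => rfl, fun z hz => hFU hz, hy⟩
  obtain ⟨u, hu⟩ := hUne
  refine hVc.subset_of_closure_inter_subset hEo ⟨u, hUV hu, hUE u hu⟩ ?_ hy
  rintro y ⟨hyc, hyV⟩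
  by_cases hyF : y ∈ F
  · exact hUE y (hFU hyF)
  have hO : V ∩ Fᶜ ∈ 𝓝 y := (hV.inter hF.isOpen_compl).mem_nhds ⟨hyV, hyF⟩
  obtain ⟨y', hy'E, e, he, hey, heO⟩ :=
    ((mem_closure_iff_frequently.1 hyc).and_eventually (exists_diff_push hO)).exists
  obtain ⟨h, hh, h1, h2, h3, h4⟩ := hy'E
  refine ⟨h * e, diffGroup.mul_mem hh he, fun z hz => ?_, fun z hz => ?_, fun z hz => ?_, ?_⟩
  · rw [Equiv.Perm.mul_apply, heO z (fun hz' => hz'.2 (hKF hz)), h1 z hz]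
  · rw [Equiv.Perm.mul_apply, heO z (fun hz' => hz hz'.1), h2 z hz]
  · rw [Equiv.Perm.mul_apply, heO z (fun hz' => hz'.2 hz)]; exact h3 z hz
  · rw [Equiv.Perm.mul_apply, hey]; exact h4

lemma mem_of_fixed_compl {V : Set (ℝ × ℝ)} {C : Equiv.Perm (ℝ × ℝ)}
    (hC : ∀ z ∉ V, C z = z) {z : ℝ × ℝ} : C z ∈ V ↔ z ∈ V := by
  constructor
  · intro h
    by_contra hz
    rw [hC z hz] at h
    exact hz h
  · intro h
    by_contra hz
    have := hC _ hz
    rw [C.injective this] at hz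
    exact hz h

/-- A finite disjoint family of closed balls in `V \ K` can be pulled into `U₀`, one ball at a
time: the new ball is squeezed until it is as good as a point, which is then dragged into `U₀`
while the balls treated before stay there. -/
lemma engulf_balls {V U₀ K : Set (ℝ × ℝ)} (hV : IsOpen V) (hVc : IsPreconnected V)
    (hU : IsOpen U₀) (hUV : U₀ ⊆ V) (hUne : U₀.Nonempty) (hK : IsCompact K) (hKU : K ⊆ U₀)
    (r : ℝ × ℝ → ℝ) (t : Finset (ℝ × ℝ)) (hr : ∀ x ∈ t, 0 < r x)
    (hB : ∀ x ∈ t, closedBall x (r x) ⊆ V \ K)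
    (hdis : (t : Set (ℝ × ℝ)).PairwiseDisjoint fun x => closedBall x (r x)) :
    ∃ C ∈ diffGroup, (∀ z ∈ K, C z = z) ∧ (∀ z ∉ V, C z = z) ∧
      ∀ x ∈ t, ∀ z ∈ closedBall x (r x), C z ∈ U₀ := by
  classical
  induction t using Finset.induction_on with
  | empty => exact ⟨1, diffGroup.one_mem, fun _ _ => rfl, fun _ _ => rfl, by simp⟩
  | insert a t ha ih =>
    obtain ⟨C, hC, hCK, hCV, hCt⟩ := ih (fun x hx => hr x (Finset.mem_insert_of_mem hx))
      (fun x hx => hB x (Finset.mem_insert_of_mem hx))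
      (hdis.subset (by simp))
    have hcomp : IsCompact (⋃ x ∈ t, closedBall x (r x)) :=
      t.isCompact_biUnion fun x _ => isCompact_closedBall _ _
    have hra : 0 < r a := hr a (Finset.mem_insert_self _ _)
    have hBa := hB a (Finset.mem_insert_self _ _)
    have haV : C a ∈ V := (mem_of_fixed_compl hCV).2
      (hBa (mem_closedBall_self hra.le)).1
    obtain ⟨h, hh, h1, h2, h3, h4⟩ := engulf_point (F := K ∪ C '' ⋃ x ∈ t, closedBall x (r x))
      hV hVc hU hUV hUne subset_union_left
      (hK.union (hcomp.image hC.1.continuous)).isClosed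
      (union_subset hKU (by
        rintro _ ⟨z, hz, rfl⟩
        simp only [mem_iUnion] at hz
        obtain ⟨x, hx, hz⟩ := hz
        exact hCt x hx z hz)) haV
    have hcont : ContinuousAt (fun z => h (C z)) a :=
      (hh.1.continuous.comp hC.1.continuous).continuousAt
    obtain ⟨ρ, hρ, hρU⟩ := Metric.mem_nhds_iff.1 (hcont.preimage_mem_nhds (hU.mem_nhds h4))
    obtain ⟨S, hS, hS1, hS2⟩ := exists_diff_shrink (x := a) (r := r a)
      (O := V \ (K ∪ ⋃ x ∈ t, closedBall x (r x))) hra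
      (hV.sdiff (hK.union hcomp).isClosed) (by
        intro z hz
        refine ⟨(hBa hz).1, ?_⟩
        rintro (hzK | hzt)
        · exact (hBa hz).2 hzK
        · simp only [mem_iUnion] at hzt
          obtain ⟨x, hx, hzx⟩ := hzt
          have hne : a ≠ x := fun h => ha (h ▸ hx)
          exact Set.disjoint_left.1 (hdis (by simp) (by simp [hx]) hne) hz hzx) hρ
    refine ⟨h * C * S, diffGroup.mul_mem (diffGroup.mul_mem hh hC) hS, fun z hz => ?_,
      fun z hz => ?_, fun x hx z hz => ?_⟩
    · rw [Equiv.Perm.mul_apply, Equiv.Perm.mul_apply, hS2 z (fun h => h.2 (Or.inl hz)), hCK z hz,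
        h1 z hz]
    · rw [Equiv.Perm.mul_apply, Equiv.Perm.mul_apply, hS2 z (fun h => hz h.1), hCV z hz, h2 z hz]
    · rw [Equiv.Perm.mul_apply, Equiv.Perm.mul_apply]
      rcases Finset.mem_insert.1 hx with rfl | hx
      · exact hρU (hS1 z hz)
      · have hz' : z ∈ ⋃ x ∈ t, closedBall x (r x) := mem_biUnion hx hz
        rw [hS2 z (fun h => h.2 (Or.inr hz'))]
        exact h3 _ (Or.inr ⟨z, hz', rfl⟩)

/-- A small open set `U₀` inside a connected open set `V` can be inflated, by a diffeomorphism
fixing `K ⊆ U₀` and everything outside `V`, so that it exhausts as much of the area of `V` as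
desired: pull a finite disjoint family of balls filling most of `V \ K` into `U₀`, and invert. -/
lemma exists_diff_inflate {V U₀ K : Set (ℝ × ℝ)} (hV : IsOpen V) (hVc : IsPreconnected V)
    (hU : IsOpen U₀) (hUV : U₀ ⊆ V) (hUne : U₀.Nonempty) (hK : IsCompact K) (hKU : K ⊆ U₀)
    {A : ℝ≥0∞} (hA : A < volume V) :
    ∃ C ∈ diffGroup, (∀ z ∈ K, C z = z) ∧ (∀ z ∉ V, C z = z) ∧ A < volume (C '' U₀) := by
  have hex : ∀ x ∈ V \ K, ∃ R > 0, closedBall x R ⊆ V \ K := fun x hx =>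
    Metric.nhds_basis_closedBall.mem_iff.1 ((hV.sdiff hK.isClosed).mem_nhds hx)
  choose! R hR0 hR using hex
  obtain ⟨t, r, htc, hts, htr, hnull, hdis⟩ := Besicovitch.exists_disjoint_closedBall_covering_ae
    (volume : Measure (ℝ × ℝ)) (fun _ => univ) (V \ K)
    (fun x _ δ hδ => ⟨δ / 2, mem_univ _, by constructor <;> linarith⟩) R hR0
  have : Countable t := htc.to_subtype
  let s : Finset t → Set (ℝ × ℝ) := fun T => K ∪ ⋃ x ∈ T, closedBall (x : ℝ × ℝ) (r x)
  have hmono : Monotone s := fun T T' h =>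
    union_subset_union_right _ (biUnion_subset_biUnion_left h)
  have hmeas : volume (⋃ T, s T) = ⨆ T, volume (s T) := (hmono.directed_le).measure_iUnion
  have hsub : V ⊆ (⋃ T, s T) ∪ ((V \ K) \ ⋃ x ∈ t, closedBall x (r x)) := by
    intro z hz
    by_cases h1 : z ∈ K
    · exact Or.inl (mem_iUnion.2 ⟨∅, Or.inl h1⟩)
    by_cases h2 : z ∈ ⋃ x ∈ t, closedBall x (r x)
    · simp only [mem_iUnion] at h2
      obtain ⟨x, hx, hzx⟩ := h2
      refine Or.inl (mem_iUnion.2 ⟨{⟨x, hx⟩}, Or.inr ?_⟩)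
      simpa using hzx
    · exact Or.inr ⟨⟨hz, h1⟩, h2⟩
  have hlt : A < ⨆ T, volume (s T) := by
    rw [← hmeas]
    refine hA.trans_le ((measure_mono hsub).trans ((measure_union_le _ _).trans ?_))
    rw [hnull, add_zero]
  obtain ⟨T, hT⟩ := lt_iSup_iff.1 hlt
  have hmemt : ∀ x ∈ T.map (Function.Embedding.subtype _), x ∈ t := by
    intro x hx
    simp only [Finset.mem_map] at hx
    obtain ⟨y, -, rfl⟩ := hx
    exact y.2
  obtain ⟨C, hC, hCK, hCV, hCt⟩ := engulf_balls hV hVc hU hUV hUne hK hKU r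
    (T.map (Function.Embedding.subtype _)) (fun x hx => (htr x (hmemt x hx)).2.1)
    (fun x hx => (closedBall_subset_closedBall (htr x (hmemt x hx)).2.2.le).trans
      (hR x (hts (hmemt x hx))))
    (hdis.subset fun x hx => hmemt x hx)
  refine ⟨C⁻¹, diffGroup.inv_mem hC, fun z hz => ?_, fun z hz => ?_, hT.trans_le
    (measure_mono ?_)⟩
  · rw [Equiv.Perm.inv_eq_iff_eq, hCK z hz]
  · rw [Equiv.Perm.inv_eq_iff_eq, hCV z hz]
  · intro z hz
    refine ⟨C z, ?_, by simp⟩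
    rcases hz with hz | hz
    · rw [hCK z hz]; exact hKU hz
    · simp only [mem_iUnion] at hz
      obtain ⟨x, hx, hzx⟩ := hz
      exact hCt x (by simp only [Finset.mem_map]; exact ⟨x, hx, rfl⟩) z hzx

/-! ### Determinants, inverses and parametric integrals -/

lemma det_prod (L : ℝ × ℝ →L[ℝ] ℝ × ℝ) :
    L.det = (L (1, 0)).1 * (L (0, 1)).2 - (L (0, 1)).1 * (L (1, 0)).2 := by
  rw [ContinuousLinearMap.det, ← LinearMap.det_toMatrix (Module.Basis.finTwoProd ℝ),
    Matrix.det_fin_two]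
  simp [LinearMap.toMatrix_apply]

/-- If `G ∘ Λ = P` near `q`, where `Λ` and `P` have the same nonzero Jacobian at `q`, then `G` is
differentiable at `Λ q` with Jacobian one. -/
lemma exists_hasFDerivAt_of_comp_eq {Λ P G : ℝ × ℝ → ℝ × ℝ} {Λ' P' : ℝ × ℝ →L[ℝ] ℝ × ℝ}
    {q : ℝ × ℝ} (hΛ : HasStrictFDerivAt Λ Λ' q) (hP : HasFDerivAt P P' q) (h0 : Λ'.det ≠ 0)
    (hdet : P'.det = Λ'.det) (hG : ∀ᶠ q' in 𝓝 q, G (Λ q') = P q') :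
    ∃ L : ℝ × ℝ →L[ℝ] ℝ × ℝ, HasFDerivAt G L (Λ q) ∧ L.det = 1 := by
  have hΛe : HasStrictFDerivAt Λ
      ((Λ'.toContinuousLinearEquivOfDetNeZero h0 : (ℝ × ℝ) ≃L[ℝ] (ℝ × ℝ)) :
        (ℝ × ℝ) →L[ℝ] (ℝ × ℝ)) q := by
    rwa [ContinuousLinearMap.coe_toContinuousLinearEquivOfDetNeZero]
  set e := Λ'.toContinuousLinearEquivOfDetNeZero h0 with he
  have h1 := hΛe.to_localInverse.hasFDerivAt
  have h2 : HasFDerivAt P P' (hΛe.localInverse Λ e q (Λ q)) := by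
    rwa [hΛe.localInverse_apply_image]
  refine ⟨P'.comp (e.symm : (ℝ × ℝ) →L[ℝ] (ℝ × ℝ)), (h2.comp _ h1).congr_of_eventuallyEq ?_, ?_⟩
  · filter_upwards [hΛe.eventually_right_inverse, hΛe.localInverse_tendsto.eventually hG]
      with w hw1 hw2
    rw [Function.comp_apply, ← hw2, hw1]
  · have h3 : Λ'.det * (e.symm : (ℝ × ℝ) →L[ℝ] (ℝ × ℝ)).det = 1 := by
      have : Λ' = (e : (ℝ × ℝ) →L[ℝ] (ℝ × ℝ)) := by
        rw [he, ContinuousLinearMap.coe_toContinuousLinearEquivOfDetNeZero]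
      rw [this]
      exact e.det_coe_symm ▸ mul_inv_cancel₀ (this ▸ h0)
    rw [← h3, ← hdet]
    exact LinearMap.det_comp _ _

lemma contDiff_parametric {F : (ℝ × ℝ) × ℝ → ℝ} (hF : ContDiff ℝ 1 F) :
    ContDiff ℝ 1 fun q : ℝ × ℝ => ∫ t in (0 : ℝ)..1, F (q, t) := by
  have hc : Continuous (fderiv ℝ F) := hF.continuous_fderiv (by simp)
  let F' : ℝ × ℝ → ℝ → (ℝ × ℝ →L[ℝ] ℝ) := fun q t =>
    (fderiv ℝ F (q, t)).comp (ContinuousLinearMap.inl ℝ (ℝ × ℝ) ℝ)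
  have hF'c : Continuous (Function.uncurry F') := by
    change Continuous fun p : (ℝ × ℝ) × ℝ =>
      (fderiv ℝ F (p.1, p.2)).comp (ContinuousLinearMap.inl ℝ (ℝ × ℝ) ℝ)
    exact (hc.comp (by fun_prop)).clm_comp continuous_const
  have hpart : ∀ q t, HasFDerivAt (fun q => F (q, t)) (F' q t) q := fun q t =>
    ((hF.differentiable (by simp)) (q, t)).hasFDerivAt.comp q (hasFDerivAt_prodMk_left q t)
  have hd : ∀ q, HasFDerivAt (fun q : ℝ × ℝ => ∫ t in (0 : ℝ)..1, F (q, t))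
      (∫ t in (0 : ℝ)..1, F' q t) q := by
    intro q
    obtain ⟨C, hC⟩ := ((isCompact_closedBall q 1).prod (isCompact_Icc (a := (0 : ℝ)) (b := 1))
      ).exists_bound_of_continuousOn (f := Function.uncurry F') hF'c.continuousOn
    refine intervalIntegral.hasFDerivAt_integral_of_dominated_of_fderiv_le (bound := fun _ => C)
      (closedBall_mem_nhds q one_pos) (Eventually.of_forall fun q' => ?_) ?_ ?_ ?_ ?_ ?_
    · exact (hF.continuous.comp (by fun_prop)).aestronglyMeasurable
    · exact (hF.continuous.comp (by fun_prop)).intervalIntegrable _ _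
    · exact (hF'c.comp (Continuous.prodMk_right q)).aestronglyMeasurable
    · refine Eventually.of_forall fun t ht q' hq' => ?_
      rw [uIoc_of_le zero_le_one] at ht
      exact hC (q', t) ⟨hq', Ioc_subset_Icc_self ht⟩
    · exact intervalIntegrable_const
    · exact Eventually.of_forall fun t _ q' _ => hpart q' t
  rw [contDiff_one_iff_fderiv]
  refine ⟨fun q => (hd q).differentiableAt, ?_⟩
  rw [funext fun q => (hd q).fderiv]
  exact intervalIntegral.continuous_parametric_intervalIntegral_of_continuous' hF'c 0 1

lemma contDiff_primitive {f : ℝ × ℝ → ℝ} (hf : ContDiff ℝ 1 f) :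
    ContDiff ℝ 1 fun q : ℝ × ℝ => ∫ t in (0 : ℝ)..q.2, f (q.1, t) := by
  have h1 : (fun q : ℝ × ℝ => ∫ t in (0 : ℝ)..q.2, f (q.1, t)) =
      fun q => q.2 * ∫ t in (0 : ℝ)..1, f (q.1, q.2 * t) := by
    funext q
    have := intervalIntegral.mul_integral_comp_mul_left (a := 0) (b := 1) (c := q.2)
      (f := fun t => f (q.1, t))
    simpa using this.symm
  rw [h1]
  exact contDiff_snd.mul (contDiff_parametric (F := fun p => f (p.1.1, p.1.2 * p.2))
    (hf.comp (by fun_prop)))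

/-! ### Polar coordinates -/

/-- The open Euclidean disc of radius `R` about the origin of `ℝ × ℝ` (whose norm is the
supremum norm, so that this is not `Metric.ball 0 R`). -/
def disc (R : ℝ) : Set (ℝ × ℝ) := {z | z.1 ^ 2 + z.2 ^ 2 < R ^ 2}

/-- Polar coordinates `(r, φ) ↦ (r cos φ, r sin φ)`, on all of `ℝ × ℝ`. -/
def pol (q : ℝ × ℝ) : ℝ × ℝ := (q.1 * Real.cos q.2, q.1 * Real.sin q.2)

lemma contDiff_pol {n : WithTop ℕ∞} : ContDiff ℝ n pol :=
  (contDiff_fst.mul (Real.contDiff_cos.comp contDiff_snd)).prodMk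
    (contDiff_fst.mul (Real.contDiff_sin.comp contDiff_snd))

lemma hasStrictFDerivAt_pol (q : ℝ × ℝ) : HasStrictFDerivAt pol (fderivPolarCoordSymm q) q := by
  have h1 : HasFDerivAt pol (fderivPolarCoordSymm q) q := hasFDerivAt_polarCoord_symm q
  have h2 := (contDiff_pol (n := 1)).hasStrictFDerivAt (x := q) (by simp)
  rwa [h1.fderiv] at h2

lemma pol_normSq (q : ℝ × ℝ) : (pol q).1 ^ 2 + (pol q).2 ^ 2 = q.1 ^ 2 := by
  simp only [pol]
  linear_combination q.1 ^ 2 * Real.sin_sq_add_cos_sq q.2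

lemma pol_mem_disc {q : ℝ × ℝ} (hq : 0 ≤ q.1) {R : ℝ} (hR : 0 ≤ R) : pol q ∈ disc R ↔ q.1 < R := by
  change (pol q).1 ^ 2 + (pol q).2 ^ 2 < R ^ 2 ↔ _
  rw [pol_normSq, sq_lt_sq₀ hq hR]

lemma exists_pol_eq (z : ℝ × ℝ) : ∃ q : ℝ × ℝ, 0 ≤ q.1 ∧ pol q = z :=
  ⟨(‖(⟨z.1, z.2⟩ : ℂ)‖, Complex.arg ⟨z.1, z.2⟩), norm_nonneg _,
    Prod.ext (Complex.norm_mul_cos_arg _) (Complex.norm_mul_sin_arg _)⟩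

lemma pol_eq_iff {q q' : ℝ × ℝ} (hq : 0 ≤ q.1) (hq' : 0 ≤ q'.1) :
    pol q = pol q' ↔ q.1 = q'.1 ∧ (q.1 = 0 ∨ ∃ k : ℤ, q.2 = q'.2 + k * (2 * Real.pi)) := by
  constructor
  · intro h
    have h1 : q.1 = q'.1 := by
      have := pol_normSq q
      rw [h, pol_normSq] at this
      exact ((sq_eq_sq₀ hq' hq).1 this).symm
    refine ⟨h1, ?_⟩
    by_cases h0 : q.1 = 0
    · exact Or.inl h0
    right
    simp only [pol, Prod.mk.injEq, ← h1, mul_eq_mul_left_iff, h0, or_false] at h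
    obtain ⟨k, hk⟩ := Real.Angle.angle_eq_iff_two_pi_dvd_sub.1
      (Real.Angle.cos_sin_inj h.1 h.2)
    exact ⟨k, by linarith⟩
  · rintro ⟨h1, h0 | ⟨k, hk⟩⟩
    · simp [pol, ← h1, h0]
    · simp only [pol, ← h1, hk, Real.cos_add_int_mul_two_pi, Real.sin_add_int_mul_two_pi]

/-! ### The polar Knothe map -/

lemma shift_int {β : ℝ → ℝ} {T : ℝ} (h : ∀ x, β (x + T) = β x + T) (k : ℤ) (x : ℝ) :
    β (x + k * T) = β x + k * T := by
  have hp : Function.Periodic (fun x => β x - x) T := fun x => by simp only [h]; ring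
  have : β (x + k * T) - (x + k * T) = β x - x := hp.int_mul k x
  linarith

lemma shift_surjective {β : ℝ → ℝ} (hβ : Continuous β) {T : ℝ} (hT : 0 < T)
    (h : ∀ x, β (x + T) = β x + T) : Function.Surjective β := by
  intro y
  obtain ⟨n, hn⟩ := exists_nat_gt (|y - β 0| / T)
  rw [div_lt_iff₀ hT] at hn
  have h1 := shift_int h n 0
  have h2 := shift_int h (-n) 0
  push_cast at h1 h2
  refine mem_range_of_exists_le_of_exists_ge hβ ⟨0 + -(n : ℝ) * T, ?_⟩ ⟨0 + n * T, ?_⟩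
  · rw [h2]; linarith [neg_abs_le (y - β 0)]
  · rw [h1]; linarith [le_abs_self (y - β 0)]

/-- The radial and angular rearrangements. For a positive density `J`, periodic in the angle,
there are a radius function `s` and an angle function `B` such that `(r, φ) ↦ (s r, B (r, φ))`
turns the measure `r J(r, φ) dr dφ` into `s ds dB`. -/
lemma exists_rearrangement {J : ℝ × ℝ → ℝ} (hJ : ContDiff ℝ 1 J) (hpos : ∀ q, 0 < J q)
    (hper : ∀ r φ, J (r, φ + 2 * Real.pi) = J (r, φ)) {R₀ : ℝ}
    (h1 : ∀ r φ, 0 ≤ r → r < R₀ → J (r, φ) = 1) :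
    ∃ (s : ℝ → ℝ) (B : ℝ × ℝ → ℝ), s 0 = 0 ∧ StrictMonoOn s (Ici 0) ∧ Continuous s ∧
      Continuous B ∧ (∀ r φ, 0 ≤ r → r < R₀ → s r = r ∧ B (r, φ) = φ) ∧
      (∀ r, StrictMono fun φ => B (r, φ)) ∧
      (∀ r φ, B (r, φ + 2 * Real.pi) = B (r, φ) + 2 * Real.pi) ∧
      ∀ r φ, 0 < r → ∃ S : ℝ × ℝ →L[ℝ] ℝ × ℝ,
        HasStrictFDerivAt (fun q : ℝ × ℝ => (s q.1, B q)) S (r, φ) ∧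
          s r * S.det = r * J (r, φ) := by
  have hpi := Real.pi_pos
  have hJr : ∀ r, Continuous fun φ => J (r, φ) := fun r => hJ.continuous.comp (by fun_prop)
  let W : ℝ × ℝ → ℝ := fun q => ∫ t in (0 : ℝ)..q.2, J (q.1, t)
  have hW : ContDiff ℝ 1 W := contDiff_primitive hJ
  have hWd : ∀ r φ, HasDerivAt (fun φ => W (r, φ)) (J (r, φ)) φ := fun r φ =>
    ((hJr r).integral_hasStrictDerivAt 0 φ).hasDerivAt
  have hW0 : ∀ r, W (r, 0) = 0 := fun r => intervalIntegral.integral_same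
  have hWm : ∀ r, StrictMono fun φ => W (r, φ) := fun r =>
    strictMono_of_hasDerivAt_pos (fun φ => hWd r φ) fun φ => hpos _
  have hWs : ∀ r φ, W (r, φ + 2 * Real.pi) = W (r, φ) + W (r, 2 * Real.pi) := by
    intro r φ
    have hp : Function.Periodic (fun φ => J (r, φ)) (2 * Real.pi) := hper r
    have h2 := hp.intervalIntegral_add_eq φ 0
    rw [zero_add] at h2
    change (∫ t in (0 : ℝ)..(φ + 2 * Real.pi), J (r, t)) =
      (∫ t in (0 : ℝ)..φ, J (r, t)) + ∫ t in (0 : ℝ)..(2 * Real.pi), J (r, t)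
    rw [← h2, intervalIntegral.integral_add_adjacent_intervals] <;>
      exact (hJr r).intervalIntegrable _ _
  -- `N r` is the mean of `J` over the circle of radius `r`; dividing the angular primitive `W` by it
  -- makes `B` advance by `2π` over one turn.
  let N : ℝ → ℝ := fun r => W (r, 2 * Real.pi) / (2 * Real.pi)
  have hN : ContDiff ℝ 1 N := (hW.comp (by fun_prop)).div_const _
  have hNpos : ∀ r, 0 < N r := fun r => by
    have := hWm r (show (0 : ℝ) < 2 * Real.pi by positivity)
    simp only [hW0] at this
    positivity
  let B : ℝ × ℝ → ℝ := fun q => W q / N q.1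
  have hB : ContDiff ℝ 1 B := hW.div (hN.comp contDiff_fst) fun q => (hNpos _).ne'
  have hBd : ∀ r φ, HasDerivAt (fun φ => B (r, φ)) (J (r, φ) / N r) φ := fun r φ =>
    (hWd r φ).div_const (N r)
  let U : ℝ → ℝ := fun r => ∫ t in (0 : ℝ)..r, N t * t
  have hU : ∀ r, HasStrictDerivAt U (N r * r) r := fun r =>
    (hN.continuous.mul continuous_id).integral_hasStrictDerivAt 0 r
  have hU0 : U 0 = 0 := intervalIntegral.integral_same
  have hUc : Continuous U := continuous_iff_continuousAt.2 fun r => (hU r).hasDerivAt.continuousAt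
  have hUm : StrictMonoOn U (Ici 0) := by
    refine strictMonoOn_of_deriv_pos (convex_Ici 0) hUc.continuousOn fun r hr => ?_
    rw [interior_Ici] at hr
    rw [(hU r).hasDerivAt.deriv]
    exact mul_pos (hNpos r) hr
  have hUpos : ∀ r, 0 < r → 0 < U r := fun r hr => by
    have := hUm self_mem_Ici (mem_Ici.2 hr.le) hr
    rwa [hU0] at this
  -- The radius function is determined by `s ds = N(r) r dr`: the disc of radius `s r` has the
  -- area that the density `J` gives to the disc of radius `r`.
  let s : ℝ → ℝ := fun r => √(2 * U r)
  have hspos : ∀ r, 0 < r → 0 < s r := fun r hr => Real.sqrt_pos.2 (by linarith [hUpos r hr])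
  have hs : ∀ r, 0 < r → HasStrictDerivAt s (N r * r / s r) r := fun r hr => by
    have := ((hU r).const_mul 2).sqrt (by linarith [hUpos r hr])
    refine this.congr_deriv ?_
    exact mul_div_mul_left _ _ two_ne_zero
  have hW1 : ∀ r φ, 0 ≤ r → r < R₀ → W (r, φ) = φ := fun r φ hr hr' => by
    simp [W, h1 r _ hr hr']
  have hN1 : ∀ r, 0 ≤ r → r < R₀ → N r = 1 := fun r hr hr' => by
    simp only [N]
    rw [hW1 r _ hr hr', div_self (by positivity)]
  have hU1 : ∀ r, 0 ≤ r → r < R₀ → U r = r ^ 2 / 2 := fun r hr hr' => by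
    have : ∫ t in (0 : ℝ)..r, N t * t = ∫ t in (0 : ℝ)..r, t := by
      refine intervalIntegral.integral_congr fun t ht => ?_
      rw [uIcc_of_le hr] at ht
      simp only [hN1 t ht.1 (ht.2.trans_lt hr'), one_mul]
    simp only [U]
    rw [this, integral_id]
    ring
  refine ⟨s, B, ?_, ?_, ?_, hB.continuous, ?_, ?_, ?_, ?_⟩
  · simp [s, hU0]
  · intro x hx y hy hxy
    have h0 : 0 ≤ U x := by
      rcases (mem_Ici.1 hx).eq_or_lt with h | h
      · rw [← h, hU0]
      · exact (hUpos x h).le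
    exact Real.sqrt_lt_sqrt (by linarith) (by linarith [hUm hx hy hxy])
  · exact (continuous_const.mul hUc).sqrt
  · intro r φ hr hr'
    constructor
    · simp only [s]
      rw [hU1 r hr hr', mul_div_cancel₀ _ two_ne_zero, Real.sqrt_sq hr]
    · simp only [B]
      rw [hW1 r φ hr hr', hN1 r hr hr', div_one]
  · exact fun r => strictMono_of_hasDerivAt_pos (fun φ => hBd r φ) fun φ =>
      div_pos (hpos _) (hNpos _)
  · intro r φ
    have h2 : W (r, 2 * Real.pi) = 2 * Real.pi * N r := by
      simp only [N]
      field_simp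
    simp only [B]
    rw [hWs, h2]
    field_simp [(hNpos r).ne']
  · intro r φ hr
    have hB' := hB.hasStrictFDerivAt (x := (r, φ)) (by simp)
    have hs' : HasStrictFDerivAt (fun q : ℝ × ℝ => s q.1)
        ((N r * r / s r) • ContinuousLinearMap.fst ℝ ℝ ℝ) (r, φ) :=
      HasStrictDerivAt.comp_hasStrictFDerivAt (r, φ) (f := Prod.fst) (hs r hr)
        hasStrictFDerivAt_fst
    refine ⟨_, hs'.prodMk hB', ?_⟩
    have h3 : fderiv ℝ B (r, φ) (0, 1) = J (r, φ) / N r := by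
      have h4 : HasDerivAt (fun φ => B (r, φ)) (fderiv ℝ B (r, φ) (0, 1)) φ :=
        hB'.hasFDerivAt.comp_hasDerivAt φ ((hasDerivAt_const φ r).prodMk (hasDerivAt_id φ))
      exact h4.unique (hBd r φ)
    rw [det_prod]
    simp only [ContinuousLinearMap.prod_apply, _root_.smul_apply,
      ContinuousLinearMap.coe_fst', smul_eq_mul, mul_one, mul_zero, zero_mul, sub_zero, h3]
    have := (hNpos r).ne'
    have := (hspos r hr).ne'
    field_simp

/-- Knothe rearrangement in polar coordinates: a diffeomorphism `θ` that is a translation near the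
origin can be replaced by a map `G` of Jacobian one which still carries concentric discs (of
different radii) onto the images `θ '' disc R`. -/
lemma exists_knothe {θ : Equiv.Perm (ℝ × ℝ)} (hθ : θ ∈ diffGroup) {p : ℝ × ℝ} {R₀ : ℝ}
    (hR₀ : 0 < R₀) (h0 : ∀ z ∈ disc R₀, θ z = p + z) :
    ∃ (G : ℝ × ℝ → ℝ × ℝ) (S : Set (ℝ × ℝ)), InjOn G S ∧
      (∀ z ∈ S, ∃ L : ℝ × ℝ →L[ℝ] ℝ × ℝ, HasFDerivAt G L z ∧ L.det = 1) ∧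
      ∀ R > 0, ∃ ρ > 0, disc ρ ⊆ S ∧ G '' disc ρ = θ '' disc R := by
  classical
  have hθd : Differentiable ℝ θ := hθ.1.differentiable (by simp)
  let D : ℝ × ℝ → ℝ := fun z => (fderiv ℝ θ z).det
  have hDc : ContDiff ℝ 1 D := by
    have h1 : ∀ v : ℝ × ℝ, ContDiff ℝ 1 fun z => fderiv ℝ θ z v := fun v =>
      (hθ.1.fderiv_right (m := 1) (WithTop.coe_le_coe.2 le_top)).clm_apply contDiff_const
    have : D = fun z => (fderiv ℝ θ z (1, 0)).1 * (fderiv ℝ θ z (0, 1)).2 -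
        (fderiv ℝ θ z (0, 1)).1 * (fderiv ℝ θ z (1, 0)).2 := funext fun z => det_prod _
    rw [this]
    exact ((h1 _).fst.mul (h1 _).snd).sub ((h1 _).fst.mul (h1 _).snd)
  have hDne : ∀ z, D z ≠ 0 := by
    intro z h
    have h1 : HasFDerivAt (fun z => θ.symm (θ z))
        ((fderiv ℝ θ.symm (θ z)).comp (fderiv ℝ θ z)) z :=
      (hθ.2.differentiable (by simp) _).hasFDerivAt.comp z (hθd z).hasFDerivAt
    have h2 : HasFDerivAt (fun z => θ.symm (θ z)) (ContinuousLinearMap.id ℝ (ℝ × ℝ)) z := by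
      simp only [Equiv.symm_apply_apply]
      exact hasFDerivAt_id z
    have h3 := congrArg ContinuousLinearMap.det (h1.unique h2)
    have h4 : ((fderiv ℝ θ.symm (θ z)).comp (fderiv ℝ θ z)).det =
        (fderiv ℝ θ.symm (θ z)).det * D z := LinearMap.det_comp _ _
    rw [h4, h, mul_zero, det_prod] at h3
    simp at h3
  have hDisc : IsOpen (disc R₀) := isOpen_lt (by fun_prop) continuous_const
  have hθ1 : ∀ z ∈ disc R₀, HasFDerivAt θ (ContinuousLinearMap.id ℝ (ℝ × ℝ)) z := by
    intro z hz
    refine ((hasFDerivAt_id z).const_add p).congr_of_eventuallyEq ?_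
    filter_upwards [hDisc.mem_nhds hz] with w hw using h0 w hw
  have hD1 : ∀ z ∈ disc R₀, D z = 1 := by
    intro z hz
    simp only [D]
    rw [(hθ1 z hz).fderiv, det_prod]
    simp
  have hzero : (0 : ℝ × ℝ) ∈ disc R₀ := by
    change (0 : ℝ) ^ 2 + 0 ^ 2 < R₀ ^ 2
    nlinarith
  have hDpos : ∀ z, 0 < D z := by
    intro z
    by_contra h
    obtain ⟨w, hw⟩ := mem_range_of_exists_le_of_exists_ge hDc.continuous ⟨z, not_lt.1 h⟩
      ⟨0, by rw [hD1 0 hzero]; exact zero_le_one⟩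
    exact hDne w hw
  have hper : ∀ r φ, D (pol (r, φ + 2 * Real.pi)) = D (pol (r, φ)) := fun r φ => by
    simp [pol]
  obtain ⟨s, B, hs0, hsm, hsc, hBc, hsB, hBm, hBs, hder⟩ :=
    exists_rearrangement (J := fun q => D (pol q)) (hDc.comp contDiff_pol) (fun q => hDpos _)
      hper (R₀ := R₀) (fun r φ hr hr' => hD1 _ ((pol_mem_disc (q := (r, φ)) hr hR₀.le).2 hr'))
  have hsnn : ∀ r, 0 ≤ r → 0 ≤ s r := fun r hr => by
    rw [← hs0]; exact hsm.monotoneOn self_mem_Ici hr hr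
  have hspos : ∀ r, 0 < r → 0 < s r := fun r hr => by
    rw [← hs0]; exact hsm self_mem_Ici (mem_Ici.2 hr.le) hr
  -- In polar coordinates `(r, φ)` of the source of `θ`, the map `Λ` has the same Jacobian as
  -- `θ ∘ pol`, so `G = θ ∘ pol ∘ Λ⁻¹` has Jacobian one; it is well defined because `Λ` and `pol`
  -- identify the same points.
  let Λ : ℝ × ℝ → ℝ × ℝ := fun q => pol (s q.1, B q)
  have hΛ : ∀ q q' : ℝ × ℝ, 0 ≤ q.1 → 0 ≤ q'.1 → (Λ q = Λ q' ↔ pol q = pol q') := by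
    rintro ⟨r, φ⟩ ⟨r', φ'⟩ hr hr'
    simp only at hr hr'
    rw [pol_eq_iff (hsnn _ hr) (hsnn _ hr'), pol_eq_iff hr hr']
    simp only
    constructor
    · rintro ⟨h1, h2⟩
      obtain rfl := hsm.injOn hr hr' h1
      refine ⟨rfl, ?_⟩
      rcases h2 with h2 | ⟨k, hk⟩
      · left
        rw [← hs0] at h2
        exact hsm.injOn hr self_mem_Ici h2
      · right
        refine ⟨k, (hBm r).injective ?_⟩
        exact hk.trans (shift_int (β := fun φ => B (r, φ)) (hBs r) k φ').symm
    · rintro ⟨rfl, h2⟩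
      refine ⟨rfl, ?_⟩
      rcases h2 with h2 | ⟨k, hk⟩
      · left; rw [h2, hs0]
      · right
        exact ⟨k, by rw [hk]; exact shift_int (β := fun φ => B (r, φ)) (hBs r) k φ'⟩
  let S : Set (ℝ × ℝ) := Λ '' {q | 0 ≤ q.1}
  let G : ℝ × ℝ → ℝ × ℝ := fun w => if h : w ∈ S then θ (pol h.choose) else 0
  have hG : ∀ q : ℝ × ℝ, 0 ≤ q.1 → G (Λ q) = θ (pol q) := by
    intro q hq
    have h : Λ q ∈ S := mem_image_of_mem _ hq
    have h1 : G (Λ q) = θ (pol h.choose) := dif_pos h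
    rw [h1, (hΛ _ _ h.choose_spec.1 hq).1 h.choose_spec.2]
  -- Near the origin nothing has been rearranged.
  have hGθ : ∀ z ∈ disc R₀, G z = θ z := by
    intro z hz
    obtain ⟨⟨r, φ⟩, hr, rfl⟩ := exists_pol_eq z
    simp only at hr
    have h1 := hsB r φ hr ((pol_mem_disc (q := (r, φ)) hr hR₀.le).1 hz)
    have h2 : Λ (r, φ) = pol (r, φ) := by simp only [Λ, h1.1, h1.2]
    rw [← hG _ hr, h2]
  refine ⟨G, S, ?_, ?_, ?_⟩
  · rintro _ ⟨q, hq, rfl⟩ _ ⟨q', hq', rfl⟩ h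
    rw [hG q hq, hG q' hq'] at h
    exact (hΛ q q' hq hq').2 (θ.injective h)
  · rintro _ ⟨⟨r, φ⟩, hr, rfl⟩
    rcases (show (0 : ℝ) ≤ r from hr).eq_or_lt with h | h
    · have hz : Λ (r, φ) = 0 := by simp [Λ, pol, ← h, hs0]
      rw [hz]
      refine ⟨ContinuousLinearMap.id ℝ _, (hθ1 0 hzero).congr_of_eventuallyEq ?_, by
        rw [det_prod]; simp⟩
      filter_upwards [hDisc.mem_nhds hzero] with w hw using hGθ w hw
    · obtain ⟨S', hS', hS'det⟩ := hder r φ h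
      have hΛ' : HasStrictFDerivAt Λ ((fderivPolarCoordSymm (s r, B (r, φ))).comp S') (r, φ) :=
        (hasStrictFDerivAt_pol (s r, B (r, φ))).comp (r, φ) hS'
      have hP : HasFDerivAt (fun q => θ (pol q))
          ((fderiv ℝ θ (pol (r, φ))).comp (fderivPolarCoordSymm (r, φ))) (r, φ) :=
        (hθd _).hasFDerivAt.comp (r, φ) (hasStrictFDerivAt_pol _).hasFDerivAt
      have hd1 : ((fderivPolarCoordSymm (s r, B (r, φ))).comp S').det = s r * S'.det := by
        refine (LinearMap.det_comp _ _).trans ?_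
        congr 1
        exact det_fderivPolarCoordSymm (s r, B (r, φ))
      have hd2 : ((fderiv ℝ θ (pol (r, φ))).comp (fderivPolarCoordSymm (r, φ))).det =
          D (pol (r, φ)) * r := by
        refine (LinearMap.det_comp _ _).trans ?_
        congr 1
        exact det_fderivPolarCoordSymm (r, φ)
      refine exists_hasFDerivAt_of_comp_eq hΛ' hP ?_ ?_ ?_
      · rw [hd1, hS'det]
        exact (mul_pos h (hDpos _)).ne'
      · rw [hd1, hd2, hS'det, mul_comm]
      · filter_upwards [(continuous_fst.isOpen_preimage _ isOpen_Ioi).mem_nhds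
          (show (r, φ) ∈ Prod.fst ⁻¹' Ioi (0 : ℝ) from h)] with q hq
        exact hG q (le_of_lt hq)
  · intro R hR
    have hdisc : disc (s R) = Λ '' {q | 0 ≤ q.1 ∧ q.1 < R} := by
      ext w
      constructor
      · intro hw
        obtain ⟨⟨ρ, α⟩, hρ, rfl⟩ := exists_pol_eq w
        simp only at hρ
        have hρR := (pol_mem_disc (q := (ρ, α)) hρ (hsnn R hR.le)).1 hw
        obtain ⟨r, hr, hr2⟩ := intermediate_value_Icc hR.le hsc.continuousOn
          (show ρ ∈ Icc (s 0) (s R) from ⟨by rw [hs0]; exact hρ, hρR.le⟩)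
        obtain ⟨φ, hφ⟩ := shift_surjective (β := fun φ => B (r, φ)) (hBc.comp (by fun_prop))
          Real.two_pi_pos (hBs r) α
        refine ⟨(r, φ), ⟨hr.1, ?_⟩, ?_⟩
        · refine lt_of_le_of_ne hr.2 ?_
          rintro rfl
          exact hρR.ne hr2.symm
        · simp only at hφ
          simp only [Λ, hr2, hφ]
      · rintro ⟨q, ⟨hq, hqR⟩, rfl⟩
        exact (pol_mem_disc (q := (s q.1, B q)) (hsnn _ hq) (hsnn R hR.le)).2
          (hsm hq (mem_Ici.2 hR.le) hqR)
    refine ⟨s R, hspos R hR, ?_, ?_⟩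
    · rw [hdisc]
      exact image_mono fun q hq => hq.1
    · rw [hdisc]
      ext w
      constructor
      · rintro ⟨_, ⟨q, ⟨hq, hqR⟩, rfl⟩, rfl⟩
        exact ⟨pol q, (pol_mem_disc hq hR.le).2 hqR, (hG q hq).symm⟩
      · rintro ⟨z, hz, rfl⟩
        obtain ⟨q, hq, rfl⟩ := exists_pol_eq z
        exact ⟨Λ q, ⟨q, ⟨hq, (pol_mem_disc hq hR.le).1 hz⟩, rfl⟩, hG q hq⟩

/-! ### Nested area-preserving embeddings of discs -/

lemma isOpen_disc (R : ℝ) : IsOpen (disc R) := isOpen_lt (by fun_prop) continuous_const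

lemma volume_disc {R : ℝ} (hR : 0 ≤ R) : volume (disc R) = ENNReal.ofReal (Real.pi * R ^ 2) := by
  have h := Complex.volume_preserving_equiv_real_prod.measure_preimage
    (isOpen_disc R).measurableSet.nullMeasurableSet
  have h2 : Complex.measurableEquivRealProd ⁻¹' disc R = ball (0 : ℂ) R := by
    ext z
    rw [mem_ball_zero_iff]
    change z.re ^ 2 + z.im ^ 2 < R ^ 2 ↔ _
    rw [← abs_of_nonneg hR, ← sq_lt_sq₀ (norm_nonneg z) (abs_nonneg R), ← Complex.normSq_eq_norm_sq,
      Complex.normSq_apply, sq_abs, sq, sq]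
  rw [← h, h2, Complex.volume_ball, mul_comm, ENNReal.ofReal_mul Real.pi_pos.le,
    ENNReal.ofReal_pow hR]
  congr 1
  rw [← NNReal.coe_real_pi, ENNReal.ofReal_coe_nnreal]

/-- The closed Euclidean disc of radius `R` about the origin. -/
def cdisc (R : ℝ) : Set (ℝ × ℝ) := {z | z.1 ^ 2 + z.2 ^ 2 ≤ R ^ 2}

lemma isCompact_cdisc (R : ℝ) : IsCompact (cdisc R) := by
  refine (isCompact_closedBall (0 : ℝ × ℝ) |R|).of_isClosed_subset
    (isClosed_le (by fun_prop) continuous_const) fun z hz => ?_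
  have hz' : z.1 ^ 2 + z.2 ^ 2 ≤ R ^ 2 := hz
  rw [mem_closedBall_zero_iff, Prod.norm_def, max_le_iff, Real.norm_eq_abs, Real.norm_eq_abs]
  exact ⟨sq_le_sq.1 (by nlinarith), sq_le_sq.1 (by nlinarith)⟩

lemma disc_subset_cdisc (R : ℝ) : disc R ⊆ cdisc R := fun z hz => by
  have h1 : z.1 ^ 2 + z.2 ^ 2 < R ^ 2 := hz
  exact h1.le

lemma cdisc_subset_disc {R R' : ℝ} (hR : 0 ≤ R) (h : R < R') : cdisc R ⊆ disc R' := fun z hz => by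
  have h1 : z.1 ^ 2 + z.2 ^ 2 ≤ R ^ 2 := hz
  change z.1 ^ 2 + z.2 ^ 2 < R' ^ 2
  nlinarith

lemma disc_subset_disc {R R' : ℝ} (hR : 0 ≤ R) (h : R ≤ R') : disc R ⊆ disc R' := fun z hz => by
  have h1 : z.1 ^ 2 + z.2 ^ 2 < R ^ 2 := hz
  change z.1 ^ 2 + z.2 ^ 2 < R' ^ 2
  nlinarith

lemma exists_cdisc_subset {O : Set (ℝ × ℝ)} (hO : IsOpen O) {M : ℝ} (hM : 0 ≤ M)
    (h : cdisc M ⊆ O) : ∃ M' > M, cdisc M' ⊆ O := by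
  obtain ⟨δ, hδ, hδO⟩ := (isCompact_cdisc M).exists_cthickening_subset_open hO h
  refine ⟨M + δ, by linarith, fun z hz => hδO ?_⟩
  have hz' : z.1 ^ 2 + z.2 ^ 2 ≤ (M + δ) ^ 2 := hz
  have hMδ : 0 < M + δ := by linarith
  set c := M / (M + δ) with hc
  have hcM : c * (M + δ) = M := div_mul_cancel₀ _ hMδ.ne'
  have hc1 : (1 - c) * (M + δ) = δ := by linarith
  have hc0 : 0 ≤ c := by positivity
  have hc2 : 0 ≤ 1 - c := by
    by_contra hcon
    nlinarith
  have hb : ∀ x : ℝ, x ^ 2 ≤ (M + δ) ^ 2 → |x - c * x| ≤ δ := fun x hx => by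
    have : |x| ≤ M + δ := abs_le_of_sq_le_sq hx hMδ.le
    rw [show x - c * x = (1 - c) * x by ring, abs_mul, abs_of_nonneg hc2]
    calc (1 - c) * |x| ≤ (1 - c) * (M + δ) := by gcongr
      _ = δ := hc1
  refine mem_cthickening_of_dist_le z (c * z.1, c * z.2) δ _ ?_ ?_
  · change (c * z.1) ^ 2 + (c * z.2) ^ 2 ≤ M ^ 2
    calc (c * z.1) ^ 2 + (c * z.2) ^ 2 = c ^ 2 * (z.1 ^ 2 + z.2 ^ 2) := by ring
      _ ≤ c ^ 2 * (M + δ) ^ 2 := by gcongr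
      _ = M ^ 2 := by rw [← mul_pow, hcM]
  · rw [dist_eq_norm, Prod.norm_def, max_le_iff]
    exact ⟨hb _ (by nlinarith), hb _ (by nlinarith)⟩

/-- One diffeomorphism carries concentric discs into the given nested regions, each with image of
area as close as desired to that of the region. It is built by inflating the image of one disc
after the other without disturbing the smaller ones, and stays a translation near the origin. -/
lemma exists_nest {V : ℕ → Set (ℝ × ℝ)} (hmono : Monotone V) (hV : ∀ i, IsOpen (V i))
    (hVc : ∀ i, IsPreconnected (V i)) {p : ℝ × ℝ} (hp : p ∈ V 0) {A : ℕ → ℝ≥0∞} {k : ℕ}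
    (hA : ∀ i < k, A i < volume (V i)) :
    ∀ n ≤ k, ∃ θ ∈ diffGroup, ∃ r₀ > 0, ∃ M ≥ r₀, ∃ R : ℕ → ℝ,
      (∀ z ∈ disc r₀, θ z = p + z) ∧ (∀ z ∈ cdisc M, θ z ∈ V n) ∧
      ∀ i < n, 0 < R i ∧ R i ≤ M ∧ (∀ z ∈ disc (R i), θ z ∈ V i) ∧
        A i < volume (θ '' disc (R i)) := by
  intro n
  induction n with
  | zero =>
    intro _
    have hτ : Equiv.addLeft p ∈ diffGroup :=
      ⟨contDiff_const.add contDiff_id, contDiff_const.add contDiff_id⟩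
    obtain ⟨M, hM, hMV⟩ := exists_cdisc_subset (M := 0)
      ((hV 0).preimage hτ.1.continuous) le_rfl (by
        intro z hz
        have hz' : z.1 ^ 2 + z.2 ^ 2 ≤ (0 : ℝ) ^ 2 := hz
        have h1 : z.1 = 0 := by nlinarith
        have h2 : z.2 = 0 := by nlinarith
        have h3 : z = 0 := Prod.ext h1 h2
        rw [h3]
        simpa using hp)
    exact ⟨Equiv.addLeft p, hτ, M, hM, M, le_rfl, fun _ => 0, fun z _ => rfl, hMV, by simp⟩
  | succ n ih =>
    intro hn
    obtain ⟨θ, hθ, r₀, hr₀, M, hM, R, h1, h2, h3⟩ := ih (by omega)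
    have hM0 : 0 < M := lt_of_lt_of_le hr₀ hM
    obtain ⟨M', hM', hMV⟩ := exists_cdisc_subset ((hV n).preimage hθ.1.continuous) hM0.le h2
    have hU : IsOpen (θ '' disc M') := by
      rw [θ.image_eq_preimage_symm]
      exact (isOpen_disc M').preimage hθ.2.continuous
    obtain ⟨C, hC, hCK, hCV, hCA⟩ := exists_diff_inflate (hV n) (hVc n) hU
      (K := θ '' cdisc M) (by
        rintro _ ⟨z, hz, rfl⟩
        exact hMV (disc_subset_cdisc _ hz))
      ⟨θ 0, 0, by change (0 : ℝ) ^ 2 + 0 ^ 2 < M' ^ 2; nlinarith, rfl⟩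
      ((isCompact_cdisc M).image hθ.1.continuous)
      (image_mono (cdisc_subset_disc hM0.le hM')) (hA n (by omega))
    have hsame : ∀ z ∈ cdisc M, (C * θ) z = θ z := fun z hz => hCK _ (mem_image_of_mem _ hz)
    have hnew : ∀ z ∈ cdisc M', (C * θ) z ∈ V n := fun z hz =>
      (mem_of_fixed_compl hCV).2 (hMV hz)
    refine ⟨C * θ, diffGroup.mul_mem hC hθ, r₀, hr₀, M', by linarith,
      Function.update R n M', fun z hz => ?_, fun z hz => hmono n.le_succ (hnew z hz),
      fun i hi => ?_⟩
    · rw [hsame z (disc_subset_cdisc _ (disc_subset_disc hr₀.le hM hz)), h1 z hz]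
    · rcases (Nat.lt_succ_iff_lt_or_eq.1 hi) with hi | rfl
      · rw [Function.update_of_ne hi.ne]
        obtain ⟨h4, h5, h6, h7⟩ := h3 i hi
        have hd : ∀ z ∈ disc (R i), (C * θ) z = θ z := fun z hz =>
          hsame z (disc_subset_cdisc _ (disc_subset_disc h4.le h5 hz))
        refine ⟨h4, by linarith, fun z hz => ?_, ?_⟩
        · rw [hd z hz]; exact h6 z hz
        · rwa [image_congr hd]
      · rw [Function.update_self]
        refine ⟨by linarith, le_rfl, fun z hz => hnew z (disc_subset_cdisc _ hz), ?_⟩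
        have : (C * θ : Equiv.Perm (ℝ × ℝ)) '' disc M' = C '' (θ '' disc M') :=
          image_comp C θ _
        rwa [this]

/-- Nested area-preserving embeddings: for connected open sets `V 0 ⊆ V 1 ⊆ ⋯` with
`A i < area (V i)`, one map of Jacobian one carries, for each `i < k`, the disc of area `A i` about
the origin into `V i`. -/
lemma exists_nested_embedding {V : ℕ → Set (ℝ × ℝ)} (hmono : Monotone V) (hV : ∀ i, IsOpen (V i))
    (hVc : ∀ i, IsPreconnected (V i)) {p : ℝ × ℝ} (hp : p ∈ V 0) {A : ℕ → ℝ} {k : ℕ}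
    (hA : ∀ i < k, ENNReal.ofReal (A i) < volume (V i)) :
    ∃ (G : ℝ × ℝ → ℝ × ℝ) (S : Set (ℝ × ℝ)), InjOn G S ∧
      (∀ z ∈ S, ∃ L : ℝ × ℝ →L[ℝ] ℝ × ℝ, HasFDerivAt G L z ∧ L.det = 1) ∧
      ∀ i < k, ∀ z : ℝ × ℝ, Real.pi * (z.1 ^ 2 + z.2 ^ 2) < A i → z ∈ S ∧ G z ∈ V i := by
  obtain ⟨θ, hθ, r₀, hr₀, M, hM, R, h1, h2, h3⟩ := exists_nest hmono hV hVc hp hA k le_rfl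
  obtain ⟨G, S, hinj, hder, hGR⟩ := exists_knothe hθ hr₀ h1
  refine ⟨G, S, hinj, hder, fun i hi z hz => ?_⟩
  obtain ⟨hR, -, hRV, hRA⟩ := h3 i hi
  obtain ⟨ρ, hρ, hρS, hρR⟩ := hGR (R i) hR
  have hvol : volume (θ '' disc (R i)) = volume (disc ρ) := by
    have hex : ∀ z, ∃ L : ℝ × ℝ →L[ℝ] ℝ × ℝ, z ∈ S → HasFDerivAt G L z ∧ L.det = 1 := fun z => by
      by_cases hzS : z ∈ S
      · obtain ⟨L, hL⟩ := hder z hzS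
        exact ⟨L, fun _ => hL⟩
      · exact ⟨0, fun h => absurd h hzS⟩
    choose L hL using hex
    rw [← hρR, ← lintegral_abs_det_fderiv_eq_addHaar_image volume (isOpen_disc ρ).measurableSet
      (fun z hz => (hL z (hρS hz)).1.hasFDerivWithinAt) (hinj.mono hρS)]
    rw [setLIntegral_congr_fun (g := fun _ => 1) (isOpen_disc ρ).measurableSet fun z hz => by
      simp [(hL z (hρS hz)).2]]
    simp
  rw [hvol, volume_disc hρ.le, ENNReal.ofReal_lt_ofReal_iff (by positivity)] at hRA
  have hzρ : z ∈ disc ρ := lt_of_mul_lt_mul_left (hz.trans hRA) Real.pi_pos.le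
  refine ⟨hρS hzρ, ?_⟩
  obtain ⟨w, hw, hwz⟩ := hρR.subset (mem_image_of_mem G hzρ)
  rw [← hwz]
  exact hRV w hw

/-! ### Hamiltonian trajectories and thin layers around level sets -/

/-- A bounded Lipschitz vector field has trajectories defined for all times: solutions on the
intervals `(-(n + 1), n + 1)` are glued by uniqueness. -/
lemma exists_flow {X : ℝ × ℝ → ℝ × ℝ} {K C : ℝ≥0} (hK : LipschitzWith K X)
    (hC : ∀ z, ‖X z‖ ≤ C) (x₀ : ℝ × ℝ) :
    ∃ γ : ℝ → ℝ × ℝ, γ 0 = x₀ ∧ ∀ t, HasDerivAt γ (X (γ t)) t := by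
  have hex : ∀ n : ℕ, ∃ α : ℝ → ℝ × ℝ, α 0 = x₀ ∧
      ∀ t ∈ Ioo (-(n + 1 : ℝ)) (n + 1), HasDerivAt α (X (α t)) t := by
    intro n
    have hn : (0 : ℝ) < n + 1 := by positivity
    have hPL : IsPicardLindelof (fun _ => X) (tmin := -(n + 1 : ℝ)) (tmax := n + 1)
        ⟨0, by constructor <;> linarith⟩ x₀ (C * (n + 1)) 0 C K :=
      { lipschitzOnWith := fun _ _ => hK.lipschitzOnWith
        continuousOn := fun _ _ => continuousOn_const
        norm_le := fun _ _ x _ => hC x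
        mul_max_le := by simp }
    obtain ⟨α, h0, hα⟩ := hPL.exists_eq_forall_mem_Icc_hasDerivWithinAt₀
    exact ⟨α, h0, fun t ht => (hα t (Ioo_subset_Icc_self ht)).hasDerivAt
      (Icc_mem_nhds ht.1 ht.2)⟩
  choose α hα0 hα using hex
  have hglue : ∀ n k : ℕ, n ≤ k → EqOn (α n) (α k) (Ioo (-(n + 1 : ℝ)) (n + 1)) := by
    intro n k hnk
    have hnk' : (n : ℝ) ≤ k := by exact_mod_cast hnk
    refine ODE_solution_unique_of_mem_Ioo (v := fun _ => X) (s := fun _ => univ) (K := K)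
      (t₀ := 0) (fun _ _ => hK.lipschitzOnWith) (by constructor <;> linarith [n.cast_nonneg (α := ℝ)])
      (fun t ht => ⟨hα n t ht, mem_univ _⟩)
      (fun t ht => ⟨hα k t ⟨by linarith [ht.1], by linarith [ht.2]⟩, mem_univ _⟩) ?_
    rw [hα0, hα0]
  refine ⟨fun t => α ⌈|t|⌉₊ t, by simp [hα0], fun t => ?_⟩
  have hev : ∀ s : ℝ, |s| < ⌈|t|⌉₊ + 1 → α ⌈|s|⌉₊ s = α (⌈|t|⌉₊ + 1) s := by
    intro s hs
    have hs1 := Nat.le_ceil |s|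
    refine hglue _ _ ?_ (abs_lt.1 (by linarith))
    exact Nat.ceil_le.2 (by push_cast; exact hs.le)
  have ht : |t| < ⌈|t|⌉₊ + 1 := by linarith [Nat.le_ceil |t|]
  simp only [hev t ht]
  refine (hα (⌈|t|⌉₊ + 1) t (abs_lt.1 (by push_cast; linarith))).congr_of_eventuallyEq ?_
  filter_upwards [(isOpen_lt continuous_abs continuous_const).mem_nhds ht] with s hs using hev s hs

/-- The Hamiltonian vector field `(-∂h/∂y, ∂h/∂x)` of a function on the plane `ℝ × ℝ`. -/
def ham (h : ℝ × ℝ → ℝ) (z : ℝ × ℝ) : ℝ × ℝ := (-(fderiv ℝ h z (0, 1)), fderiv ℝ h z (1, 0))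

lemma fderiv_prod_apply (h : ℝ × ℝ → ℝ) (z v : ℝ × ℝ) :
    fderiv ℝ h z v = v.1 * fderiv ℝ h z (1, 0) + v.2 * fderiv ℝ h z (0, 1) := by
  have : v = v.1 • ((1, 0) : ℝ × ℝ) + v.2 • ((0, 1) : ℝ × ℝ) := by simp
  conv_lhs => rw [this, map_add, map_smul, map_smul]
  rfl

/-- A function without nonconstant Hamiltonian orbits of period less than one has trajectories
through its regular points that are injective on `[0, 1)`, and along which it is constant and
regular. -/
lemma exists_regular_orbit {h : ℝ × ℝ → ℝ} (hs : ContDiff ℝ ∞ h) (hc : HasCompactSupport h)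
    (hno : ∀ γ : ℝ → ℝ × ℝ, (∀ t, HasDerivAt γ (ham h (γ t)) t) →
      ∀ T, 0 < T → T < 1 → γ T = γ 0 → ∀ t, γ t = γ 0)
    {x₀ : ℝ × ℝ} (hx₀ : fderiv ℝ h x₀ ≠ 0) :
    ∃ γ : ℝ → ℝ × ℝ, γ 0 = x₀ ∧ (∀ t, HasDerivAt γ (ham h (γ t)) t) ∧
      (∀ t, h (γ t) = h x₀) ∧ (∀ t, ham h (γ t) ≠ 0) ∧ InjOn γ (Ico 0 1) := by
  have hfd : ∀ v : ℝ × ℝ, ContDiff ℝ 1 fun z => fderiv ℝ h z v := fun v =>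
    (hs.fderiv_right (m := 1) (WithTop.coe_le_coe.2 le_top)).clm_apply contDiff_const
  have hX : ContDiff ℝ 1 (ham h) := (hfd _).neg.prodMk (hfd _)
  have hXc : HasCompactSupport (ham h) :=
    (hc.fderiv ℝ).mono (Function.support_subset_iff'.2 fun z hz => by
      rw [Function.notMem_support] at hz
      simp [ham, hz])
  obtain ⟨K, hK⟩ := hX.lipschitzWith_of_hasCompactSupport hXc (by simp)
  obtain ⟨C, hC⟩ := hX.continuous.bounded_above_of_compact_support hXc
  obtain ⟨γ, hγ0, hγ⟩ := exists_flow hK (C := C.toNNReal)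
    (fun z => (hC z).trans (Real.le_coe_toNNReal C)) x₀
  have hne0 : ham h x₀ ≠ 0 := by
    intro h0
    simp only [ham, Prod.mk_eq_zero, neg_eq_zero] at h0
    exact hx₀ (ContinuousLinearMap.ext fun v => by
      rw [fderiv_prod_apply, h0.1, h0.2]; simp)
  have hne : ∀ t, ham h (γ t) ≠ 0 := by
    intro t ht
    have : γ = fun _ => γ t := by
      refine ODE_solution_unique_univ (v := fun _ => ham h) (s := fun _ => univ) (K := K)
        (t₀ := t) (fun _ => hK.lipschitzOnWith) (fun s => ⟨hγ s, mem_univ _⟩)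
        (fun s => ⟨?_, mem_univ _⟩) rfl
      rw [ht]
      exact hasDerivAt_const _ _
    have h1 : γ 0 = γ t := congrFun this 0
    rw [← h1, hγ0] at ht
    exact hne0 ht
  refine ⟨γ, hγ0, hγ, fun t => ?_, hne, ?_⟩
  · have hd : ∀ s, HasDerivAt (fun s => h (γ s)) 0 s := by
      intro s
      have h1 := ((hs.differentiable (by simp)) (γ s)).hasFDerivAt.comp_hasDerivAt s (hγ s)
      refine h1.congr_deriv ?_
      rw [fderiv_prod_apply]
      simp only [ham]
      ring
    have := is_const_of_deriv_eq_zero (fun s => (hd s).differentiableAt)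
      (fun s => (hd s).deriv) t 0
    rw [this, hγ0]
  · have key : ∀ a b : ℝ, 0 ≤ a → a < b → b < 1 → γ a ≠ γ b := by
      intro a b ha hab hb heq
      have hd : ∀ t, HasDerivAt (fun t => γ (t + a)) (ham h (γ (t + a))) t := fun t =>
        (hγ (t + a)).comp_add_const t a
      have h1 := hno (fun t => γ (t + a)) hd (b - a) (by linarith) (by linarith)
        (by simp [heq])
      have h2 : (fun t => γ (t + a)) = fun _ => γ (0 + a) := funext h1
      have h3 := hd 0
      rw [h2] at h3
      exact hne _ (h3.unique (hasDerivAt_const _ _))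
    intro a ha b hb heq
    rcases lt_trichotomy a b with hab | hab | hab
    · exact absurd heq (key a b ha.1 hab hb.2)
    · exact hab
    · exact absurd heq.symm (key b a hb.1 hab ha.2)

/-- A thin layer around a regular level `s₀` has at least the area of the thin rectangle whose
sides are the width of the layer and the (unit) length of the time interval on which the
trajectory in that level is injective: the map `(t, s) ↦ γ t + s ∇h / |∇h|²` is nearly
area-preserving and nearly increases `h` by `s`. -/
lemma exists_layer {h : ℝ × ℝ → ℝ} (hs : ContDiff ℝ ∞ h) {U : Set (ℝ × ℝ)} (hU : IsOpen U)
    {γ : ℝ → ℝ × ℝ} {s₀ : ℝ} (hγ : ∀ t, HasDerivAt γ (ham h (γ t)) t) (hγU : ∀ t, γ t ∈ U)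
    (hγs : ∀ t, h (γ t) = s₀) (hne : ∀ t, ham h (γ t) ≠ 0) (hinj : InjOn γ (Ico 0 1))
    {η : ℝ} (hη : 0 < η) (hη1 : η < 1) :
    ∃ δ₀ > 0, ∀ δ, 0 < δ → δ ≤ δ₀ → ENNReal.ofReal ((1 - η) * ((1 - η) * (2 * δ))) ≤
      volume (U ∩ h ⁻¹' closedBall s₀ ((1 + η) * δ)) := by
  have hfd : ∀ v : ℝ × ℝ, ContDiff ℝ 1 fun z => fderiv ℝ h z v := fun v =>
    (hs.fderiv_right (m := 1) (WithTop.coe_le_coe.2 le_top)).clm_apply contDiff_const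
  have hγ1 : ContDiff ℝ 1 γ := by
    rw [contDiff_one_iff_deriv]
    refine ⟨fun t => (hγ t).differentiableAt, ?_⟩
    rw [funext fun t => (hγ t).deriv]
    have hγc : Continuous γ := continuous_iff_continuousAt.2 fun t => (hγ t).continuousAt
    exact (((hfd _).continuous.comp hγc).neg).prodMk ((hfd _).continuous.comp hγc)
  let a : ℝ → ℝ := fun t => fderiv ℝ h (γ t) (1, 0)
  let b : ℝ → ℝ := fun t => fderiv ℝ h (γ t) (0, 1)
  have ha : ContDiff ℝ 1 a := (hfd _).comp hγ1
  have hb : ContDiff ℝ 1 b := (hfd _).comp hγ1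
  have hab : ∀ t, 0 < a t ^ 2 + b t ^ 2 := by
    intro t
    by_contra hcon
    have h1 : a t = 0 := by nlinarith [sq_nonneg (a t), sq_nonneg (b t)]
    have h2 : b t = 0 := by nlinarith [sq_nonneg (a t), sq_nonneg (b t)]
    refine hne t ?_
    change (-(b t), a t) = 0
    rw [h1, h2]; simp
  have habC : ContDiff ℝ 1 fun t => a t ^ 2 + b t ^ 2 := (ha.pow 2).add (hb.pow 2)
  let ν : ℝ → ℝ × ℝ := fun t => (a t / (a t ^ 2 + b t ^ 2), b t / (a t ^ 2 + b t ^ 2))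
  have hν : ContDiff ℝ 1 ν :=
    (ha.div habC fun t => (hab t).ne').prodMk (hb.div habC fun t => (hab t).ne')
  let Ψ : ℝ × ℝ → ℝ × ℝ := fun q => γ q.1 + q.2 • ν q.1
  have hΨ : ContDiff ℝ 1 Ψ :=
    (hγ1.comp contDiff_fst).add (contDiff_snd.fun_smul (hν.comp contDiff_fst))
  have hΨ0 : ∀ t, Ψ (t, 0) = γ t := fun t => by simp [Ψ]
  have hΨs : ∀ t s, HasDerivAt (fun s => Ψ (t, s)) (ν t) s := fun t s => by
    have h1 := ((hasDerivAt_id s).smul_const (ν t)).const_add (γ t)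
    exact h1.congr_deriv (one_smul ℝ _)
  have hΨd := hΨ.differentiable (by simp)
  have hdet0 : ∀ t, (fderiv ℝ Ψ (t, 0)).det = -1 := by
    intro t
    have h1 : fderiv ℝ Ψ (t, 0) (1, 0) = ham h (γ t) := by
      have h2 : HasDerivAt (fun t => Ψ (t, 0)) (fderiv ℝ Ψ (t, 0) (1, 0)) t :=
        (hΨd (t, 0)).hasFDerivAt.comp_hasDerivAt t
          ((hasDerivAt_id t).prodMk (hasDerivAt_const t (0 : ℝ)))
      rw [funext hΨ0] at h2
      exact h2.unique (hγ t)
    have h1' : fderiv ℝ Ψ (t, 0) (1, 0) = (-(b t), a t) := h1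
    have h2 : fderiv ℝ Ψ (t, 0) (0, 1) = ν t := by
      have h3 : HasDerivAt (fun s => Ψ (t, s)) (fderiv ℝ Ψ (t, 0) (0, 1)) 0 :=
        (hΨd (t, 0)).hasFDerivAt.comp_hasDerivAt 0
          ((hasDerivAt_const (0 : ℝ) t).prodMk (hasDerivAt_id (0 : ℝ)))
      exact h3.unique (hΨs t 0)
    rw [det_prod, h1', h2]
    have := (hab t).ne'
    simp only [ν]
    field_simp
    ring
  have hdetc : Continuous fun q => (fderiv ℝ Ψ q).det :=
    ContinuousLinearMap.continuous_det.comp (hΨ.continuous_fderiv (by simp))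
  have hcore : IsCompact (Icc (0 : ℝ) (1 - η) ×ˢ ({0} : Set ℝ)) :=
    isCompact_Icc.prod isCompact_singleton
  obtain ⟨N, hN, hNinj⟩ : ∃ N ∈ 𝓝ˢ (Icc (0 : ℝ) (1 - η) ×ˢ ({0} : Set ℝ)), InjOn Ψ N := by
    refine Set.InjOn.exists_mem_nhdsSet ?_ hcore (fun q _ => hΨ.continuous.continuousAt) ?_
    · rintro ⟨t, s⟩ ⟨ht, hs⟩ ⟨t', s'⟩ ⟨ht', hs'⟩ heq
      obtain rfl : s = 0 := hs
      obtain rfl : s' = 0 := hs'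
      rw [hΨ0, hΨ0] at heq
      have htt : t = t' := hinj ⟨(show 0 ≤ t from ht.1), (show t ≤ 1 - η from ht.2).trans_lt
        (by linarith)⟩ ⟨(show 0 ≤ t' from ht'.1), (show t' ≤ 1 - η from ht'.2).trans_lt
        (by linarith)⟩ heq
      rw [htt]
    · rintro ⟨t, s⟩ ⟨ht, hs⟩
      obtain rfl : s = 0 := hs
      have hst := hΨ.hasStrictFDerivAt (x := (t, (0 : ℝ))) (by simp)
      have hst' : HasStrictFDerivAt Ψ
          (((fderiv ℝ Ψ (t, 0)).toContinuousLinearEquivOfDetNeZero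
            (by rw [hdet0]; norm_num) : (ℝ × ℝ) ≃L[ℝ] (ℝ × ℝ)) : (ℝ × ℝ) →L[ℝ] (ℝ × ℝ)) (t, 0) := by
        rwa [ContinuousLinearMap.coe_toContinuousLinearEquivOfDetNeZero]
      exact ⟨_, (hst'.toOpenPartialHomeomorph Ψ).open_source.mem_nhds
        hst'.mem_toOpenPartialHomeomorph_source, (hst'.toOpenPartialHomeomorph Ψ).injOn⟩
  have hslope : Continuous fun q : ℝ × ℝ => fderiv ℝ h (Ψ q) (ν q.1) := by
    refine ((hs.continuous_fderiv (by simp)).comp hΨ.continuous).clm_apply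
      (hν.continuous.comp continuous_fst)
  have hslope0 : ∀ t, fderiv ℝ h (Ψ (t, 0)) (ν t) = 1 := by
    intro t
    rw [hΨ0, fderiv_prod_apply]
    change a t / (a t ^ 2 + b t ^ 2) * a t + b t / (a t ^ 2 + b t ^ 2) * b t = 1
    have := (hab t).ne'
    field_simp
  obtain ⟨u, v, hu, hv, hIu, h0v, huv⟩ := generalized_tube_lemma isCompact_Icc isCompact_singleton
    (s := Icc (0 : ℝ) (1 - η)) (t := ({0} : Set ℝ))
    (n := interior N ∩ (Ψ ⁻¹' U ∩ ({q | 1 - η < |(fderiv ℝ Ψ q).det|} ∩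
      {q | |fderiv ℝ h (Ψ q) (ν q.1)| < 1 + η})))
    (isOpen_interior.inter ((hU.preimage hΨ.continuous).inter
      ((isOpen_lt continuous_const hdetc.abs).inter (isOpen_lt hslope.abs continuous_const))))
    (by
      rintro ⟨t, s⟩ ⟨ht, hs⟩
      obtain rfl : s = 0 := hs
      refine ⟨subset_interior_iff_mem_nhdsSet.2 hN ⟨ht, rfl⟩, ?_, ?_, ?_⟩
      · change Ψ (t, 0) ∈ U
        rw [hΨ0]; exact hγU t
      · change 1 - η < |(fderiv ℝ Ψ (t, 0)).det|
        rw [hdet0]; norm_num; exact hη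
      · change |fderiv ℝ h (Ψ (t, 0)) (ν t)| < 1 + η
        rw [hslope0]; norm_num; exact hη)
  obtain ⟨δ₀, hδ₀, hδv⟩ := nhds_basis_closedBall.mem_iff.1 (hv.mem_nhds (h0v rfl))
  refine ⟨δ₀, hδ₀, fun δ hδ hδ' => ?_⟩
  set Q : Set (ℝ × ℝ) := Icc (0 : ℝ) (1 - η) ×ˢ Icc (-δ) δ with hQ
  have hQn : ∀ q ∈ Q, q ∈ interior N ∩ (Ψ ⁻¹' U ∩ ({q | 1 - η < |(fderiv ℝ Ψ q).det|} ∩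
      {q | |fderiv ℝ h (Ψ q) (ν q.1)| < 1 + η})) := fun q hq => by
    refine huv ⟨hIu hq.1, hδv ?_⟩
    rw [mem_closedBall_zero_iff, Real.norm_eq_abs]
    exact (abs_le.2 hq.2).trans hδ'
  have hQm : MeasurableSet Q := measurableSet_Icc.prod measurableSet_Icc
  have hvolQ : volume Q = ENNReal.ofReal ((1 - η) * (2 * δ)) := by
    rw [hQ, Measure.volume_eq_prod, Measure.prod_prod, Real.volume_Icc, Real.volume_Icc,
      ← ENNReal.ofReal_mul (by linarith)]
    congr 1
    ring
  calc ENNReal.ofReal ((1 - η) * ((1 - η) * (2 * δ)))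
      = ∫⁻ _ in Q, ENNReal.ofReal (1 - η) := by
        rw [setLIntegral_const, hvolQ, ENNReal.ofReal_mul (by linarith)]
    _ ≤ ∫⁻ q in Q, ENNReal.ofReal |(fderiv ℝ Ψ q).det| :=
        setLIntegral_mono' hQm fun q hq => ENNReal.ofReal_le_ofReal (hQn q hq).2.2.1.le
    _ = volume (Ψ '' Q) :=
        lintegral_abs_det_fderiv_eq_addHaar_image volume hQm
          (fun q _ => (hΨd q).hasFDerivAt.hasFDerivWithinAt)
          (hNinj.mono fun q hq => interior_subset (hQn q hq).1)
    _ ≤ _ := by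
        refine measure_mono ?_
        rintro _ ⟨⟨t, s⟩, hq, rfl⟩
        refine ⟨(hQn _ hq).2.1, ?_⟩
        have hder : ∀ s' ∈ Icc (-δ) δ, HasDerivWithinAt (fun s => h (Ψ (t, s)))
            (fderiv ℝ h (Ψ (t, s')) (ν t)) (Icc (-δ) δ) s' := fun s' _ =>
          (((hs.differentiable (by simp)) _).hasFDerivAt.comp_hasDerivAt s'
            (hΨs t s')).hasDerivWithinAt
        have hmvt := (convex_Icc (-δ) δ).norm_image_sub_le_of_norm_hasDerivWithin_le
          (C := 1 + η) hder (fun s' hs' => (hQn (t, s') ⟨hq.1, hs'⟩).2.2.2.le)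
          (show (0 : ℝ) ∈ Icc (-δ) δ by constructor <;> linarith) hq.2
        simp only [sub_zero, hΨ0, hγs] at hmvt
        change dist (h (Ψ (t, s))) s₀ ≤ _
        rw [Real.dist_eq, ← Real.norm_eq_abs]
        refine hmvt.trans ?_
        rw [Real.norm_eq_abs]
        have : |s| ≤ δ := abs_le.2 hq.2
        gcongr

/-! ### The area of superlevel components -/

/-- One-dimensional Sard along a ray: almost every value between `c` and `h p` is taken by `h` at
a regular point of the component of `{c < h}` around `p`, namely the first point at which the
horizontal ray from `p` meets the level. -/
lemma ae_exists_regular {h : ℝ × ℝ → ℝ} (hs : ContDiff ℝ ∞ h) (hc : HasCompactSupport h)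
    {p : ℝ × ℝ} {c : ℝ} (hc0 : 0 ≤ c) :
    ∀ᵐ s, s ∈ Ioo c (h p) →
      ∃ x ∈ connectedComponentIn {z | c < h z} p, h x = s ∧ fderiv ℝ h x ≠ 0 := by
  let ρ : ℝ → ℝ × ℝ := fun t => (p.1 + t, p.2)
  have hρ : Continuous ρ := by fun_prop
  have hρd : ∀ t, HasDerivAt ρ (1, 0) t := fun t =>
    ((hasDerivAt_id t).const_add p.1).prodMk (hasDerivAt_const t p.2)
  have hρ0 : ρ 0 = p := by simp [ρ]
  let k : ℝ → ℝ := fun t => h (ρ t)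
  have hk : Continuous k := hs.continuous.comp hρ
  have hkd : ∀ t, HasDerivAt k (fderiv ℝ h (ρ t) (1, 0)) t := fun t =>
    ((hs.differentiable (by simp)) _).hasFDerivAt.comp_hasDerivAt t (hρd t)
  have hcrit : volume (k '' {t | fderiv ℝ h (ρ t) (1, 0) = 0}) = 0 := by
    refine addHaar_image_eq_zero_of_det_fderivWithin_eq_zero volume
      (f' := fun t => ContinuousLinearMap.toSpanSingleton ℝ (fderiv ℝ h (ρ t) (1, 0)))
      (fun t _ => (hkd t).hasFDerivAt.hasFDerivWithinAt) (fun t ht => ?_)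
    have ht' : fderiv ℝ h (ρ t) (1, 0) = 0 := ht
    rw [ht']
    simp [ContinuousLinearMap.det]
  have hae : ∀ᵐ s, s ∉ k '' {t | fderiv ℝ h (ρ t) (1, 0) = 0} :=
    measure_eq_zero_iff_ae_notMem.1 hcrit
  obtain ⟨T, hT0, hT⟩ : ∃ T, 0 ≤ T ∧ k T = 0 := by
    obtain ⟨R, hR⟩ := hc.isCompact.isBounded.subset_closedBall p
    refine ⟨|R| + 1, by positivity, ?_⟩
    by_contra hne
    have h1 := hR (subset_tsupport h (show ρ (|R| + 1) ∈ Function.support h from hne))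
    rw [mem_closedBall, Prod.dist_eq] at h1
    have h2 := (le_max_left _ _).trans h1
    simp only [ρ, Real.dist_eq, add_sub_cancel_left] at h2
    rw [abs_of_pos (by positivity)] at h2
    linarith [le_abs_self R]
  filter_upwards [hae] with s hs' ⟨hcs, hsp⟩
  have hk0 : k 0 = h p := by simp only [k, hρ0]
  have hne : (Icc 0 T ∩ k ⁻¹' {s}).Nonempty := by
    obtain ⟨t, ht, hts⟩ := intermediate_value_Icc' hT0 hk.continuousOn
      (show s ∈ Icc (k T) (k 0) by rw [hT, hk0]; exact ⟨by linarith, hsp.le⟩)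
    exact ⟨t, ht, hts⟩
  obtain ⟨τ, ⟨⟨hτ0, hτT⟩, hτs⟩, hτm⟩ :=
    (isCompact_Icc.inter_right (isClosed_singleton.preimage hk)).exists_isLeast hne
  have hτs' : h (ρ τ) = s := hτs
  have hle : ∀ t ∈ Icc 0 τ, s ≤ k t := by
    intro t ht
    by_contra! hlt
    obtain ⟨t', ht', hts⟩ := intermediate_value_Icc' ht.1 hk.continuousOn
      (show s ∈ Icc (k t) (k 0) by rw [hk0]; exact ⟨hlt.le, hsp.le⟩)
    have h1 : τ ≤ t' := hτm ⟨⟨ht'.1, ht'.2.trans (ht.2.trans hτT)⟩, hts⟩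
    have h2 : t = τ := le_antisymm ht.2 (h1.trans ht'.2)
    rw [h2] at hlt
    exact hlt.ne hτs'
  refine ⟨ρ τ, ?_, hτs', fun h0 => hs' ⟨τ, ?_, hτs'⟩⟩
  · refine (isPreconnected_Icc.image ρ hρ.continuousOn).subset_connectedComponentIn
      (s := ρ '' Icc 0 τ) ⟨0, ⟨le_rfl, hτ0⟩, hρ0⟩ ?_ ⟨τ, ⟨hτ0, le_rfl⟩, rfl⟩
    rintro _ ⟨t, ht, rfl⟩
    exact hcs.trans_le (hle t ht)
  · change fderiv ℝ h (ρ τ) (1, 0) = 0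
    rw [h0]; rfl

/-- The area lemma: the component of `{c < h}` around `p` has area at least `h p - c`.
The distribution function of `h` on that component has derivative at least one at almost every
level, because the component contains, at almost every level, a trajectory that stays injective for a
unit time. -/
lemma le_volume_component {h : ℝ × ℝ → ℝ} (hs : ContDiff ℝ ∞ h) (hc : HasCompactSupport h)
    (hno : ∀ γ : ℝ → ℝ × ℝ, (∀ t, HasDerivAt γ (ham h (γ t)) t) →
      ∀ T, 0 < T → T < 1 → γ T = γ 0 → ∀ t, γ t = γ 0)
    {p : ℝ × ℝ} {c : ℝ} (hc0 : 0 ≤ c) :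
    ENNReal.ofReal (h p - c) ≤ volume (connectedComponentIn {z | c < h z} p) := by
  set U := connectedComponentIn {z | c < h z} p with hU
  have hUo : IsOpen U := (isOpen_lt continuous_const hs.continuous).connectedComponentIn
  have hUfin : volume U ≠ ⊤ := by
    refine ((measure_mono ?_).trans_lt hc.isCompact.measure_lt_top).ne
    intro z hz
    have : z ∈ {z | c < h z} := connectedComponentIn_subset _ _ hz
    have : c < h z := this
    exact subset_tsupport h (show h z ≠ 0 by linarith [this])
  have hhm : Measurable h := hs.continuous.measurable
  let ν : Measure ℝ := (volume.restrict U).map h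
  have : IsFiniteMeasure (volume.restrict U) := ⟨by
    rw [Measure.restrict_apply_univ]; exact hUfin.lt_top⟩
  have hν : IsFiniteMeasure ν := Measure.isFiniteMeasure_map _ _
  have hνapp : ∀ s, MeasurableSet s → ν s = volume (U ∩ h ⁻¹' s) := fun s hs' => by
    rw [Measure.map_apply hhm hs', Measure.restrict_apply (hhm hs'), inter_comm]
  have hdens : ∀ᵐ s, s ∈ Ioo c (h p) → 1 ≤ ν.rnDeriv volume s := by
    filter_upwards [ae_exists_regular hs hc (p := p) hc0,
      Besicovitch.ae_tendsto_rnDeriv ν volume] with s hreg hlim hsI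
    obtain ⟨x, hxU, hxs, hx0⟩ := hreg hsI
    obtain ⟨γ, hγ0, hγ, hγs, hne, hinj⟩ := exists_regular_orbit hs hc hno hx0
    have hγc : Continuous γ := continuous_iff_continuousAt.2 fun t => (hγ t).continuousAt
    have hγU : ∀ t, γ t ∈ U := by
      intro t
      rw [hU, connectedComponentIn_eq hxU]
      refine (isPreconnected_range hγc).subset_connectedComponentIn ⟨0, hγ0⟩ ?_ ⟨t, rfl⟩
      rintro _ ⟨t', rfl⟩
      change c < h (γ t')
      rw [hγs, hxs]; exact hsI.1
    have hη : ∀ η : ℝ, 0 < η → η < 1 →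
        ENNReal.ofReal ((1 - η) * (1 - η) / (1 + η)) ≤ ν.rnDeriv volume s := by
      intro η h0 h1
      obtain ⟨δ₀, hδ₀, hδ⟩ := exists_layer hs hUo hγ hγU (s₀ := s)
        (fun t => (hγs t).trans hxs) hne hinj h0 h1
      refine ge_of_tendsto hlim ?_
      have hpos : (0 : ℝ) < (1 + η) * δ₀ := by positivity
      filter_upwards [Ioo_mem_nhdsGT hpos] with r hr
      have hr0 : 0 < r := hr.1
      have h2 := hδ (r / (1 + η)) (by positivity) (by
        rw [div_le_iff₀ (by positivity)]; linarith [hr.2])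
      rw [mul_div_cancel₀ r (by positivity : (1 + η) ≠ 0),
        ← hνapp _ measurableSet_closedBall] at h2
      rw [Real.volume_closedBall, ENNReal.le_div_iff_mul_le (Or.inl (by simpa using hr0))
        (Or.inl ENNReal.ofReal_ne_top), ← ENNReal.ofReal_mul
        (div_nonneg (mul_nonneg (by linarith) (by linarith)) (by linarith))]
      refine le_trans (le_of_eq ?_) h2
      congr 1
      field_simp
    have hcont : Tendsto (fun η : ℝ => ENNReal.ofReal ((1 - η) * (1 - η) / (1 + η)))
        (𝓝[>] 0) (𝓝 1) := by
      have h1 : ContinuousAt (fun η : ℝ => (1 - η) * (1 - η) / (1 + η)) 0 := by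
        refine ContinuousAt.div (by fun_prop) (by fun_prop) (by norm_num)
      have h2 := (ENNReal.continuous_ofReal.tendsto _).comp h1.tendsto
      simp only [sub_zero, add_zero, mul_one, div_one, ENNReal.ofReal_one] at h2
      exact h2.mono_left nhdsWithin_le_nhds
    refine le_of_tendsto hcont ?_
    filter_upwards [Ioo_mem_nhdsGT (zero_lt_one' ℝ)] with η hη'
    exact hη η hη'.1 hη'.2
  calc ENNReal.ofReal (h p - c) = ∫⁻ _ in Ioo c (h p), 1 := by
        rw [setLIntegral_one, Real.volume_Ioo]
    _ ≤ ∫⁻ s in Ioo c (h p), ν.rnDeriv volume s := by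
        refine lintegral_mono_ae ?_
        rw [ae_restrict_iff' measurableSet_Ioo]
        exact hdens
    _ ≤ ν (Ioo c (h p)) := Measure.setLIntegral_rnDeriv_le _
    _ = volume (U ∩ h ⁻¹' Ioo c (h p)) := hνapp _ measurableSet_Ioo
    _ ≤ volume U := measure_mono inter_subset_left

/-! ### Products of planar maps -/

/-- The product of two maps of the plane, as a map of `ℝ⁴`: `g` acts on the first pair of
conjugate coordinates and `k` on the second. -/
def prodMap (g k : ℝ × ℝ → ℝ × ℝ) (p : Esp 2) : Esp 2 :=
  (![(g (p.1 0, p.2 0)).1, (k (p.1 1, p.2 1)).1], ![(g (p.1 0, p.2 0)).2, (k (p.1 1, p.2 1)).2])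

/-- A product of area-preserving embeddings is a symplectic embedding. -/
lemma prodMap_symplectic {g k : ℝ × ℝ → ℝ × ℝ} {A : Set (Esp 2)} {S T : Set (ℝ × ℝ)}
    (hg : InjOn g S) (hk : InjOn k T)
    (hgd : ∀ z ∈ S, ∃ L : ℝ × ℝ →L[ℝ] ℝ × ℝ, HasFDerivAt g L z ∧ L.det = 1)
    (hkd : ∀ z ∈ T, ∃ L : ℝ × ℝ →L[ℝ] ℝ × ℝ, HasFDerivAt k L z ∧ L.det = 1)
    (hA : ∀ p ∈ A, (p.1 0, p.2 0) ∈ S ∧ (p.1 1, p.2 1) ∈ T) :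
    IsSymplecticEmbeddingOn (prodMap g k) A := by
  refine ⟨fun p hp q hq heq => ?_, fun p hp => ?_⟩
  · have h1 := congrFun (congrArg Prod.fst heq) 0
    have h2 := congrFun (congrArg Prod.snd heq) 0
    have h3 := congrFun (congrArg Prod.fst heq) 1
    have h4 := congrFun (congrArg Prod.snd heq) 1
    simp only [prodMap, Matrix.cons_val_zero, Matrix.cons_val_one] at h1 h2 h3 h4
    have e1 := hg (hA p hp).1 (hA q hq).1 (Prod.ext h1 h2)
    have e2 := hk (hA p hp).2 (hA q hq).2 (Prod.ext h3 h4)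
    simp only [Prod.mk.injEq] at e1 e2
    refine Prod.ext (funext fun i => ?_) (funext fun i => ?_)
    · fin_cases i
      exacts [e1.1, e2.1]
    · fin_cases i
      exacts [e1.2, e2.2]
  · obtain ⟨L, hL, hLd⟩ := hgd _ (hA p hp).1
    obtain ⟨M, hM, hMd⟩ := hkd _ (hA p hp).2
    let π₀ : Esp 2 →L[ℝ] ℝ × ℝ :=
      ((ContinuousLinearMap.proj 0).comp (ContinuousLinearMap.fst ℝ _ _)).prod
        ((ContinuousLinearMap.proj 0).comp (ContinuousLinearMap.snd ℝ _ _))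
    let π₁ : Esp 2 →L[ℝ] ℝ × ℝ :=
      ((ContinuousLinearMap.proj 1).comp (ContinuousLinearMap.fst ℝ _ _)).prod
        ((ContinuousLinearMap.proj 1).comp (ContinuousLinearMap.snd ℝ _ _))
    have hg' : HasFDerivAt (fun p : Esp 2 => g (p.1 0, p.2 0)) (L.comp π₀) p :=
      HasFDerivAt.comp (f := fun p => π₀ p) p hL π₀.hasFDerivAt
    have hk' : HasFDerivAt (fun p : Esp 2 => k (p.1 1, p.2 1)) (M.comp π₁) p :=
      HasFDerivAt.comp (f := fun p => π₁ p) p hM π₁.hasFDerivAt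
    let D : Esp 2 →L[ℝ] Esp 2 :=
      (ContinuousLinearMap.pi ![(ContinuousLinearMap.fst ℝ ℝ ℝ).comp (L.comp π₀),
        (ContinuousLinearMap.fst ℝ ℝ ℝ).comp (M.comp π₁)]).prod
      (ContinuousLinearMap.pi ![(ContinuousLinearMap.snd ℝ ℝ ℝ).comp (L.comp π₀),
        (ContinuousLinearMap.snd ℝ ℝ ℝ).comp (M.comp π₁)])
    have hD : HasFDerivAt (prodMap g k) D p := by
      refine HasFDerivAt.prodMk ?_ ?_
      · refine hasFDerivAt_pi.2 fun i => ?_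
        fin_cases i
        exacts [hg'.fst, hk'.fst]
      · refine hasFDerivAt_pi.2 fun i => ?_
        fin_cases i
        exacts [hg'.snd, hk'.snd]
    refine ⟨hD.differentiableAt, fun v w => ?_⟩
    rw [hD.fderiv]
    have key : ∀ (L : ℝ × ℝ →L[ℝ] ℝ × ℝ), L.det = 1 → ∀ a b c d : ℝ,
        (L (a, b)).1 * (L (c, d)).2 - (L (a, b)).2 * (L (c, d)).1 = a * d - b * c := by
      intro L hL a b c d
      have hlin : ∀ a b : ℝ, L (a, b) = a • L (1, 0) + b • L (0, 1) := fun a b => by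
        rw [← map_smul, ← map_smul, ← map_add]; simp
      rw [det_prod] at hL
      rw [hlin a b, hlin c d]
      simp only [Prod.fst_add, Prod.snd_add, Prod.smul_fst, Prod.smul_snd, smul_eq_mul]
      linear_combination (a * d - b * c) * hL
    have k1 := key L hLd (v.1 0) (v.2 0) (w.1 0) (w.2 0)
    have k2 := key M hMd (v.1 1) (v.2 1) (w.1 1) (w.2 1)
    simp only [omega0, Fin.sum_univ_two]
    exact congrArg₂ (· + ·) k1 k2

/-- `H`, read as a function on `ℝ × ℝ`. -/
def planeFn (H : Esp 1 → ℝ) (z : ℝ × ℝ) : ℝ := H (fun _ => z.1, fun _ => z.2)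

/-- The identification of `ℝ × ℝ` with `Esp 1`. -/
def toEsp : (ℝ × ℝ) →L[ℝ] Esp 1 :=
  (ContinuousLinearMap.pi fun _ => ContinuousLinearMap.fst ℝ ℝ ℝ).prod
    (ContinuousLinearMap.pi fun _ => ContinuousLinearMap.snd ℝ ℝ ℝ)

/-- The two encodings of the Hamiltonian vector field on the plane agree. -/
lemma hamVF_toEsp {H : Esp 1 → ℝ} (hH : ContDiff ℝ (⊤ : ℕ∞) H) (z : ℝ × ℝ) :
    toEsp (ham (planeFn H) z) = hamVF H (toEsp z) := by
  have h1 : fderiv ℝ (planeFn H) z = (fderiv ℝ H (toEsp z)).comp toEsp :=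
    (((hH.differentiable (by simp)) (toEsp z)).hasFDerivAt.comp z toEsp.hasFDerivAt).fderiv
  have e1 : toEsp (0, 1) = (0, Pi.single 0 1) := by
    ext i <;> fin_cases i <;> simp [toEsp]
  have e2 : toEsp (1, 0) = (Pi.single 0 1, 0) := by
    ext i <;> fin_cases i <;> simp [toEsp]
  rw [ham, h1]
  simp only [ContinuousLinearMap.comp_apply, e1, e2]
  ext i <;> fin_cases i <;> rfl

lemma planeFn_no_orbit {H : Esp 1 → ℝ} (hH : ContDiff ℝ (⊤ : ℕ∞) H)
    (hno : ∀ γ : ℝ → Esp 1, (∀ t, HasDerivAt γ (hamVF H (γ t)) t) →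
      ∀ T, 0 < T → T < 1 → γ T = γ 0 → ∀ t, γ t = γ 0)
    (γ : ℝ → ℝ × ℝ) (hγ : ∀ t, HasDerivAt γ (ham (planeFn H) (γ t)) t) (T : ℝ) (hT : 0 < T)
    (hT1 : T < 1) (hper : γ T = γ 0) (t : ℝ) : γ t = γ 0 := by
  have h1 := hno (fun t => toEsp (γ t)) (fun t => by
    rw [← hamVF_toEsp hH]
    exact toEsp.hasFDerivAt.comp_hasDerivAt t (hγ t)) T hT hT1 (by simp only [hper]) t
  exact Prod.ext (congrFun (congrArg Prod.fst h1) 0) (congrFun (congrArg Prod.snd h1) 0)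

lemma planeFn_hasCompactSupport {H : Esp 1 → ℝ} (hH : HasCompactSupport H) :
    HasCompactSupport (planeFn H) := by
  refine HasCompactSupport.of_support_subset_isCompact
    (hH.isCompact.image (f := fun p : Esp 1 => (p.1 0, p.2 0)) (by fun_prop)) fun z hz => ?_
  exact ⟨toEsp z, subset_tsupport H hz, rfl⟩

/-! ### The two planar factors -/

/-- Every `r ∈ [0, a)` lies in one of the steps `[jη, (j + 1)η)` with `j < a / η`. -/
lemma exists_step {η a r : ℝ} (hη : 0 < η) (hr : 0 ≤ r) (hra : r < a) :
    ∃ j < ⌈a / η⌉₊, r < (j + 1) * η ∧ (j + 2) * η ≤ r + 2 * η := by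
  refine ⟨⌊r / η⌋₊, ?_, ?_, ?_⟩
  · rw [Nat.lt_ceil]
    exact (Nat.floor_le (by positivity)).trans_lt (by gcongr)
  · exact (div_lt_iff₀ hη).1 (Nat.lt_floor_add_one _)
  · have := (le_div_iff₀ hη).1 (Nat.floor_le (show 0 ≤ r / η by positivity))
    linarith

/-- An area-preserving embedding of discs into the strip over `0 < t < 1` under which the first
coordinate of the image of `z` lies between `0` and `π |z|² + 2η`. The nested regions are the
rectangles `(0, (j + 2)η) × (0, 1)`. -/
lemma exists_strip {η : ℝ} (hη : 0 < η) {a : ℝ} :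
    ∃ (G : ℝ × ℝ → ℝ × ℝ) (S : Set (ℝ × ℝ)), InjOn G S ∧
      (∀ z ∈ S, ∃ L : ℝ × ℝ →L[ℝ] ℝ × ℝ, HasFDerivAt G L z ∧ L.det = 1) ∧
      ∀ z : ℝ × ℝ, Real.pi * (z.1 ^ 2 + z.2 ^ 2) < a → z ∈ S ∧ 0 < (G z).1 ∧
        (G z).1 < Real.pi * (z.1 ^ 2 + z.2 ^ 2) + 2 * η ∧ (G z).2 ∈ Ioo (0 : ℝ) 1 := by
  obtain ⟨G, S, hG, hGd, hGV⟩ := exists_nested_embedding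
    (V := fun j : ℕ => Ioo (0 : ℝ) ((j + 2) * η) ×ˢ Ioo (0 : ℝ) 1) (p := (η, 1 / 2))
    (A := fun j => (j + 1) * η) (k := ⌈a / η⌉₊)
    (fun i j hij => prod_mono (Ioo_subset_Ioo_right (by gcongr)) subset_rfl)
    (fun _ => isOpen_Ioo.prod isOpen_Ioo)
    (fun _ => isPreconnected_Ioo.prod isPreconnected_Ioo)
    ⟨⟨hη, by simp only [Nat.cast_zero]; linarith⟩, by norm_num, by norm_num⟩
    (fun i _ => by
      rw [Measure.volume_eq_prod, Measure.prod_prod, Real.volume_Ioo, Real.volume_Ioo]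
      simp only [sub_zero, ENNReal.ofReal_one, mul_one]
      exact (ENNReal.ofReal_lt_ofReal_iff (by positivity)).2 (by gcongr; norm_num))
  refine ⟨G, S, hG, hGd, fun z hz => ?_⟩
  obtain ⟨j, hj, hj1, hj2⟩ := exists_step hη (by positivity) hz
  obtain ⟨h1, h2⟩ := hGV j hj z hj1
  exact ⟨h1, h2.1.1, h2.1.2.trans_le hj2, h2.2⟩

/-- An area-preserving embedding of discs into the plane that carries a point `z` to a point where
`h` exceeds `h p - π |z|² - 2η`. The nested regions are the components of `{h > h p - (j + 2)η}`
around `p`, whose areas the area lemma bounds from below. -/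
lemma exists_high {h : ℝ × ℝ → ℝ} (hs : ContDiff ℝ ∞ h) (hc : HasCompactSupport h)
    (hno : ∀ γ : ℝ → ℝ × ℝ, (∀ t, HasDerivAt γ (ham h (γ t)) t) →
      ∀ T, 0 < T → T < 1 → γ T = γ 0 → ∀ t, γ t = γ 0)
    (p : ℝ × ℝ) {η a : ℝ} (hη : 0 < η) (ha : a + 2 * η ≤ h p) :
    ∃ (G : ℝ × ℝ → ℝ × ℝ) (S : Set (ℝ × ℝ)), InjOn G S ∧
      (∀ z ∈ S, ∃ L : ℝ × ℝ →L[ℝ] ℝ × ℝ, HasFDerivAt G L z ∧ L.det = 1) ∧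
      ∀ z : ℝ × ℝ, Real.pi * (z.1 ^ 2 + z.2 ^ 2) < a → z ∈ S ∧
        h p - Real.pi * (z.1 ^ 2 + z.2 ^ 2) - 2 * η < h (G z) := by
  have hlevel : ∀ j : ℕ, h p - (j + 2) * η < h p := fun j => by
    have : 0 < (j + 2) * η := by positivity
    linarith
  obtain ⟨G, S, hG, hGd, hGV⟩ := exists_nested_embedding
    (V := fun j : ℕ => connectedComponentIn {z | h p - (j + 2) * η < h z} p) (p := p)
    (A := fun j => (j + 1) * η) (k := ⌈a / η⌉₊)
    (fun i j hij => connectedComponentIn_mono p fun z (hz : _ < h z) => by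
      have : ((i : ℝ) + 2) * η ≤ (j + 2) * η := by gcongr
      exact (show h p - (j + 2) * η ≤ h p - (i + 2) * η by linarith).trans_lt hz)
    (fun _ => (isOpen_lt continuous_const hs.continuous).connectedComponentIn)
    (fun _ => isPreconnected_connectedComponentIn)
    (mem_connectedComponentIn (hlevel 0))
    (fun i hi => by
      have hi' : i * η < a := (lt_div_iff₀ hη).1 (Nat.lt_ceil.1 hi)
      refine lt_of_lt_of_le ?_ (le_volume_component hs hc hno (by linarith))
      exact (ENNReal.ofReal_lt_ofReal_iff (by linarith [hlevel i])).2 (by linarith))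
  refine ⟨G, S, hG, hGd, fun z hz => ?_⟩
  obtain ⟨j, hj, hj1, hj2⟩ := exists_step hη (by positivity) hz
  obtain ⟨h1, h2⟩ := hGV j hj z hj1
  refine ⟨h1, ?_⟩
  have h3 : G z ∈ {z | h p - (j + 2) * η < h z} := connectedComponentIn_subset _ _ h2
  have h4 : h p - (j + 2) * η < h (G z) := h3
  linarith

lemma planeFn_prodMap (H : Esp 1 → ℝ) (g k : ℝ × ℝ → ℝ × ℝ) (p : Esp 2) :
    H (projE (prodMap g k p)) = planeFn H (g (p.1 0, p.2 0)) := by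
  unfold planeFn
  congr 1
  ext i <;> fin_cases i <;> rfl

/-- (Proposition 3.3 of the paper, global embeddings in dimension 2.)
If `H ≥ 0` is a compactly supported autonomous Hamiltonian on `ℝ²` with `max H = m > 0`
and no non-constant closed trajectory in time less than `1`, then for every
`0 < ε < m` the open ball `B⁴(m - ε)` embeds symplectically into the regions
`R_H^- = {(x,s,t) : t ∈ [0,1], 0 ≤ s ≤ H x}` and
`R_H^+ = {(x,s,t) : t ∈ [0,1], H x ≤ s ≤ m}` in `ℝ⁴ = ℝ² × ℝ²` with the form
`dx∧dy ⊕ ds∧dt`. -/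
theorem statement11 (H : Esp 1 → ℝ)
    (hHsm : ContDiff ℝ (⊤ : ℕ∞) H) (hHsupp : HasCompactSupport H)
    (hpos : ∀ x, 0 ≤ H x) (m : ℝ) (hmax : IsGreatest (Set.range H) m) (hm : 0 < m)
    (hno : ∀ γ : ℝ → Esp 1, (∀ t, HasDerivAt γ (hamVF H (γ t)) t) →
      ∀ T, 0 < T → T < 1 → γ T = γ 0 → ∀ t, γ t = γ 0) :
    ∀ ε : ℝ, 0 < ε → ε < m →
      (∃ f : Esp 2 → Esp 2, IsSymplecticEmbeddingOn f (openBallCap 2 (m - ε)) ∧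
        f '' openBallCap 2 (m - ε) ⊆
          {p : Esp 2 | p.2 (Fin.last 1) ∈ Icc (0:ℝ) 1 ∧
            0 ≤ p.1 (Fin.last 1) ∧ p.1 (Fin.last 1) ≤ H (projE p)}) ∧
      (∃ f : Esp 2 → Esp 2, IsSymplecticEmbeddingOn f (openBallCap 2 (m - ε)) ∧
        f '' openBallCap 2 (m - ε) ⊆
          {p : Esp 2 | p.2 (Fin.last 1) ∈ Icc (0:ℝ) 1 ∧
            H (projE p) ≤ p.1 (Fin.last 1) ∧ p.1 (Fin.last 1) ≤ m}) := by
  intro ε hε hεm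
  obtain ⟨⟨p, hp⟩, -⟩ := id hmax
  have hle : ∀ x, H x ≤ m := fun x => hmax.2 ⟨x, rfl⟩
  have hs : ContDiff ℝ (⊤ : ℕ∞) (planeFn H) := hHsm.comp toEsp.contDiff
  have hc := planeFn_hasCompactSupport hHsupp
  have hhp : planeFn H (p.1 0, p.2 0) = m := by
    rw [← hp]
    unfold planeFn
    congr 1
    ext i <;> fin_cases i <;> rfl
  have hη : 0 < ε / 4 := by positivity
  obtain ⟨k, T, hk, hkd, hkT⟩ := exists_strip hη (a := m - ε)
  have hball : ∀ q ∈ openBallCap 2 (m - ε),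
      0 ≤ Real.pi * (q.1 0 ^ 2 + q.2 0 ^ 2) ∧ 0 ≤ Real.pi * (q.1 1 ^ 2 + q.2 1 ^ 2) ∧
      Real.pi * (q.1 0 ^ 2 + q.2 0 ^ 2) + Real.pi * (q.1 1 ^ 2 + q.2 1 ^ 2) < m - ε := by
    intro q hq
    have hq' : Real.pi * ∑ i, (q.1 i ^ 2 + q.2 i ^ 2) < m - ε := hq
    rw [Fin.sum_univ_two, mul_add] at hq'
    exact ⟨by positivity, by positivity, hq'⟩
  constructor
  · obtain ⟨g, S, hg, hgd, hgS⟩ := exists_high hs hc (planeFn_no_orbit hHsm hno)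
      (p.1 0, p.2 0) hη (a := m - ε) (by rw [hhp]; linarith)
    refine ⟨prodMap g k, prodMap_symplectic hg hk hgd hkd fun q hq => ?_, ?_⟩
    · obtain ⟨h1, h2, h3⟩ := hball q hq
      exact ⟨(hgS _ (by dsimp only; linarith)).1, (hkT _ (by dsimp only; linarith)).1⟩
    · rintro _ ⟨q, hq, rfl⟩
      obtain ⟨h1, h2, h3⟩ := hball q hq
      obtain ⟨-, g1⟩ := hgS (q.1 0, q.2 0) (by dsimp only; linarith)
      obtain ⟨-, k1, k2, k3⟩ := hkT (q.1 1, q.2 1) (by dsimp only; linarith)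
      rw [hhp] at g1
      refine ⟨Ioo_subset_Icc_self k3, k1.le, ?_⟩
      rw [planeFn_prodMap H]
      change (k (q.1 1, q.2 1)).1 ≤ _
      dsimp only at g1 k2
      linarith
  · -- Over the graph the plane factor only has to be moved off the support, where `H = 0`.
    obtain ⟨R, hR⟩ := hc.isCompact.isBounded.subset_closedBall 0
    have hπ := Real.pi_gt_three
    refine ⟨prodMap (fun z => (z.1 + (|R| + m + 1), z.2)) k,
      prodMap_symplectic (S := univ) ?_ hk ?_ hkd fun q hq => ⟨mem_univ _, ?_⟩, ?_⟩
    · rintro ⟨x, y⟩ - ⟨x', y'⟩ - heq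
      simpa using heq
    · refine fun z _ => ⟨ContinuousLinearMap.id ℝ _, ?_, ?_⟩
      · exact (hasFDerivAt_id z).add_const ((|R| + m + 1, 0) : ℝ × ℝ) |>.congr_of_eventuallyEq
          (Eventually.of_forall fun z => by ext <;> simp)
      · rw [det_prod]; simp
    · obtain ⟨h1, h2, h3⟩ := hball q hq
      exact (hkT _ (by dsimp only; linarith)).1
    · rintro _ ⟨q, hq, rfl⟩
      obtain ⟨h1, h2, h3⟩ := hball q hq
      obtain ⟨-, k1, k2, k3⟩ := hkT (q.1 1, q.2 1) (by dsimp only; linarith)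
      dsimp only at k2
      have hzero : H (projE (prodMap (fun z => (z.1 + (|R| + m + 1), z.2)) k q)) = 0 := by
        rw [planeFn_prodMap H]
        by_contra hne
        have h4 := hR (subset_tsupport _ hne)
        rw [mem_closedBall_zero_iff, Prod.norm_def] at h4
        have h5 := (le_max_left _ _).trans h4
        rw [Real.norm_eq_abs] at h5
        dsimp only at h5
        -- `π x² < m` gives `|x| < m + 1`.
        have h6 : -(m + 1) < q.1 0 := by
          nlinarith [sq_nonneg (q.1 0), sq_nonneg (q.2 0), sq_nonneg (q.1 0 + 1)]
        linarith [le_abs_self (q.1 0 + (|R| + m + 1)), le_abs_self R]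
      refine ⟨Ioo_subset_Icc_self k3, ?_, ?_⟩
      · rw [hzero]; exact k1.le
      · change (k (q.1 1, q.2 1)).1 ≤ _
        linarith
end
end

section
/- Let a > 0 and ε > 0. Let D = {(u,v) ∈ ℝ² : π(u²+v²) < a} be the open disc of area a, and define h_B(u,v) = a − π(u²+v²) on D and h_T(u,v) = a + ε − u on the open rectangle R = (0, a+ε)×(0,1). Then there exists a smooth injective map f : D → R with det Df ≡ 1 (area- and orientation-preserving) such that h_T(f(u,v)) ≥ h_B(u,v) for all (u,v) ∈ D. -/
/-!
The embedding is a composition of two explicit maps.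

* The disc is pushed off the slit `{p ≤ 0, q = 0}` by
  `(u, v) ↦ (p, q) = (u / ψ'(v) + δ, ψ v)`, where `ψ v = v + δ * arctan (M * v)`.
  It maps horizontal lines to horizontal lines and has Jacobian determinant `1`. Since `ψ' ≥ 1` and
  `|ψ v| ≤ |v| + 2δ`, it increases `π (u² + v²)` by at most `ε` when `δ` is small. The slit can
  only be met at `v = 0`, where `u` is divided by `ψ'(0) = 1 + δ M`; for `M` large this makes
  `|u| / ψ'(0) < δ`, hence `p > 0`.
* On the slit plane, the action-angle coordinates `w ↦ (π |w|², arg w / (2π) + 1/2)` form an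
  injective, area-preserving, orientation-preserving map into `(0, ∞) × (0, 1)`.

The first coordinate of the composition is `π (p² + q²) ≤ π (u² + v²) + ε`, which gives both the
comparison of `h_T` with `h_B` and the upper bound `a + ε`.
-/

open Set

noncomputable section

/-- The Jacobian determinant of a map `f : ℝ² → ℝ²` at a point `z`. -/
def jacDet (f : ℝ × ℝ → ℝ × ℝ) (z : ℝ × ℝ) : ℝ :=
  ((fderiv ℝ f z) (1, 0)).1 * ((fderiv ℝ f z) (0, 1)).2 -
    ((fderiv ℝ f z) (1, 0)).2 * ((fderiv ℝ f z) (0, 1)).1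

/-- The stretching `ψ` of the vertical coordinate. Its derivative is at least `1` everywhere and
is `1 + δ * M` at the origin. -/
def stretch (δ M v : ℝ) : ℝ := v + δ * Real.arctan (M * v)

/-- The derivative of `stretch`. -/
def stretchDeriv (δ M v : ℝ) : ℝ := 1 + δ * (M / (1 + (M * v) ^ 2))

/-- The area-preserving map pushing the disc off the slit, with the plane of values read as `ℂ`. -/
def pushOff (δ M : ℝ) (z : ℝ × ℝ) : ℂ :=
  ((z.1 * (stretchDeriv δ M z.2)⁻¹ + δ : ℝ) : ℂ) + ((stretch δ M z.2 : ℝ) : ℂ) * Complex.I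

/-- Action-angle coordinates on the slit plane. The imaginary part of `Complex.log` is
`Complex.arg`; the logarithm makes smoothness and derivatives directly available. -/
def actionAngle (w : ℂ) : ℝ × ℝ :=
  (Real.pi * (w.re ^ 2 + w.im ^ 2), (Complex.log w).im * (2 * Real.pi)⁻¹ + 1 / 2)

lemma pushOff_re (δ M : ℝ) (z : ℝ × ℝ) :
    (pushOff δ M z).re = z.1 * (stretchDeriv δ M z.2)⁻¹ + δ := by
  simp [pushOff, -Complex.ofReal_add, -Complex.ofReal_mul]

lemma pushOff_im (δ M : ℝ) (z : ℝ × ℝ) : (pushOff δ M z).im = stretch δ M z.2 := by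
  simp [pushOff, -Complex.ofReal_add, -Complex.ofReal_mul]

lemma one_le_stretchDeriv {δ M : ℝ} (hδ : 0 < δ) (hM : 0 < M) (v : ℝ) :
    1 ≤ stretchDeriv δ M v := by
  have : 0 ≤ δ * (M / (1 + (M * v) ^ 2)) := by positivity
  unfold stretchDeriv; linarith

lemma hasDerivAt_stretch (δ M v : ℝ) :
    HasDerivAt (stretch δ M) (stretchDeriv δ M v) v := by
  have h := (hasDerivAt_id v).add
    ((((hasDerivAt_id v).const_mul M).arctan).const_mul δ)
  refine h.congr_deriv ?_
  simp only [stretchDeriv, id]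
  ring

lemma contDiff_stretch (δ M : ℝ) : ContDiff ℝ (⊤ : ℕ∞) (stretch δ M) := by
  unfold stretch
  exact contDiff_id.add (contDiff_const.mul
    (Real.contDiff_arctan.comp (contDiff_const.mul contDiff_id)))

lemma contDiff_stretchDeriv (δ M : ℝ) : ContDiff ℝ (⊤ : ℕ∞) (stretchDeriv δ M) := by
  unfold stretchDeriv
  refine contDiff_const.add (contDiff_const.mul (contDiff_const.div ?_ ?_))
  · exact contDiff_const.add ((contDiff_const.mul contDiff_id).pow 2)
  · intro x; positivity

lemma strictMono_stretch {δ M : ℝ} (hδ : 0 < δ) (hM : 0 < M) : StrictMono (stretch δ M) := by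
  intro x y h
  have : Real.arctan (M * x) < Real.arctan (M * y) :=
    Real.arctan_strictMono (mul_lt_mul_of_pos_left h hM)
  unfold stretch
  have := mul_lt_mul_of_pos_left this hδ
  linarith

lemma abs_stretch_le {δ M : ℝ} (hδ : 0 < δ) (v : ℝ) : |stretch δ M v| ≤ |v| + 2 * δ := by
  have h1 : |Real.arctan (M * v)| ≤ 2 := by
    rw [abs_le]
    have := Real.neg_pi_div_two_lt_arctan (M * v)
    have := Real.arctan_lt_pi_div_two (M * v)
    have := Real.pi_le_four
    constructor <;> linarith
  unfold stretch
  calc |v + δ * Real.arctan (M * v)| ≤ |v| + |δ * Real.arctan (M * v)| := abs_add_le _ _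
    _ ≤ |v| + 2 * δ := by
      rw [abs_mul, abs_of_pos hδ]; nlinarith

lemma contDiff_pushOff {δ M : ℝ} (hδ : 0 < δ) (hM : 0 < M) :
    ContDiff ℝ (⊤ : ℕ∞) (pushOff δ M) := by
  have h1 : ContDiff ℝ (⊤ : ℕ∞)
      (fun z : ℝ × ℝ => z.1 * (stretchDeriv δ M z.2)⁻¹ + δ) :=
    (contDiff_fst.mul (((contDiff_stretchDeriv δ M).comp contDiff_snd).inv
      fun z => (zero_lt_one.trans_le (one_le_stretchDeriv hδ hM z.2)).ne')).add contDiff_const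
  have h2 : ContDiff ℝ (⊤ : ℕ∞) (fun z : ℝ × ℝ => stretch δ M z.2) :=
    (contDiff_stretch δ M).comp contDiff_snd
  exact (Complex.ofRealCLM.contDiff.comp h1).add
    ((Complex.ofRealCLM.contDiff.comp h2).mul contDiff_const)

lemma pushOff_injective {δ M : ℝ} (hδ : 0 < δ) (hM : 0 < M) :
    Function.Injective (pushOff δ M) := by
  intro z w h
  have h2 : z.2 = w.2 := by
    have := congrArg Complex.im h
    rw [pushOff_im, pushOff_im] at this
    exact (strictMono_stretch hδ hM).injective this
  have h1 := congrArg Complex.re h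
  rw [pushOff_re, pushOff_re, h2, add_left_inj] at h1
  have := (zero_lt_one.trans_le (one_le_stretchDeriv hδ hM w.2)).ne'
  exact Prod.ext (mul_right_cancel₀ (inv_ne_zero this) h1) h2

/-- The push-off preserves area: its differential at `z` is
`(1/ψ', c; 0, ψ')` for some shear coefficient `c`. -/
lemma fderiv_pushOff {δ M : ℝ} (hδ : 0 < δ) (hM : 0 < M) (z : ℝ × ℝ) :
    ∃ L : ℝ × ℝ →L[ℝ] ℂ, HasFDerivAt (pushOff δ M) L z ∧ ∃ c : ℝ,
      L (1, 0) = (((stretchDeriv δ M z.2)⁻¹ : ℝ) : ℂ) ∧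
      L (0, 1) = (c : ℂ) + ((stretchDeriv δ M z.2 : ℝ) : ℂ) * Complex.I := by
  have hne := (zero_lt_one.trans_le (one_le_stretchDeriv hδ hM z.2)).ne'
  obtain ⟨d, hd⟩ : ∃ d, HasDerivAt (stretchDeriv δ M) d z.2 :=
    ⟨_, ((contDiff_stretchDeriv δ M).differentiable (by simp) z.2).hasDerivAt⟩
  have h1 := (hasFDerivAt_fst (𝕜 := ℝ) (p := z)).mul
    ((hd.inv hne).comp_hasFDerivAt z (hasFDerivAt_snd (𝕜 := ℝ) (p := z)))
  have h2 := (hasDerivAt_stretch δ M z.2).comp_hasFDerivAt z (hasFDerivAt_snd (𝕜 := ℝ) (p := z))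
  have h3 := (Complex.ofRealCLM.hasFDerivAt.comp z (h1.add_const δ)).add
    ((Complex.ofRealCLM.hasFDerivAt.comp z h2).mul_const Complex.I)
  refine ⟨_, h3, z.1 * (-d / stretchDeriv δ M z.2 ^ 2), ?_, ?_⟩
  · simp
  · simp [mul_comm]

lemma contDiffAt_actionAngle {w : ℂ} (hw : w ∈ Complex.slitPlane) :
    ContDiffAt ℝ (⊤ : ℕ∞) actionAngle w := by
  have hlog : ContDiffAt ℝ (⊤ : ℕ∞) Complex.log w :=
    (Complex.contDiffAt_log hw).restrict_scalars ℝ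
  have hre : ContDiffAt ℝ (⊤ : ℕ∞) Complex.re w := Complex.reCLM.contDiff.contDiffAt
  have him : ContDiffAt ℝ (⊤ : ℕ∞) Complex.im w := Complex.imCLM.contDiff.contDiffAt
  have hlim : ContDiffAt ℝ (⊤ : ℕ∞) (fun w => (Complex.log w).im) w :=
    Complex.imCLM.contDiff.contDiffAt.comp w hlog
  exact (contDiffAt_const.mul ((hre.pow 2).add (him.pow 2))).prodMk
    ((hlim.mul contDiffAt_const).add contDiffAt_const)

lemma fderiv_actionAngle {w : ℂ} (hw : w ∈ Complex.slitPlane) :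
    ∃ L : ℂ →L[ℝ] ℝ × ℝ, HasFDerivAt actionAngle L w ∧ ∀ k : ℂ,
      L k = (2 * Real.pi * (w.re * k.re + w.im * k.im),
        (w.re * k.im - w.im * k.re) / (w.re ^ 2 + w.im ^ 2) * (2 * Real.pi)⁻¹) := by
  have hlog := (Complex.hasStrictDerivAt_log hw).hasDerivAt.hasFDerivAt.restrictScalars ℝ
  have hre : HasFDerivAt Complex.re Complex.reCLM w := Complex.reCLM.hasFDerivAt
  have him : HasFDerivAt Complex.im Complex.imCLM w := Complex.imCLM.hasFDerivAt
  have hlim : HasFDerivAt (fun w => (Complex.log w).im) _ w :=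
    Complex.imCLM.hasFDerivAt.comp w hlog
  have h := (((hre.pow 2).add (him.pow 2)).const_mul Real.pi).prodMk
    ((hlim.mul_const (2 * Real.pi)⁻¹).add_const (1 / 2))
  refine ⟨_, h, fun k => ?_⟩
  ext
  · simp
    ring
  · simp [Complex.normSq_apply, Complex.inv_re, Complex.inv_im]
    ring

/-- Action and angle determine a complex number. -/
lemma actionAngle_injective : Function.Injective actionAngle := by
  intro w w' h
  have h1 := congrArg Prod.fst h
  have h2 := congrArg Prod.snd h
  simp only [actionAngle, Complex.log_im] at h1 h2
  have hpi := Real.pi_pos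
  apply Complex.ext_norm_arg
  · have h3 := mul_left_cancel₀ hpi.ne' h1
    rw [Complex.norm_def, Complex.norm_def, Complex.normSq_apply, Complex.normSq_apply]
    congr 1; linarith
  · exact mul_right_cancel₀ (by positivity) (add_right_cancel h2)

lemma actionAngle_snd_mem {w : ℂ} (hw : w ∈ Complex.slitPlane) :
    (actionAngle w).2 ∈ Ioo (0 : ℝ) 1 := by
  have hpi := Real.pi_pos
  have h1 := Complex.neg_pi_lt_arg w
  have h2 : w.arg < Real.pi :=
    lt_of_le_of_ne (Complex.arg_le_pi w) (Complex.mem_slitPlane_iff_arg.1 hw).1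
  simp only [actionAngle, Complex.log_im, mem_Ioo, ← div_eq_mul_inv]
  have h3 : -(1 / 2) < w.arg / (2 * Real.pi) := by
    rw [lt_div_iff₀ (by positivity)]; linarith
  have h4 : w.arg / (2 * Real.pi) < 1 / 2 := by
    rw [div_lt_iff₀ (by positivity)]; linarith
  constructor <;> linarith

lemma jacDet_comp {δ M : ℝ} (hδ : 0 < δ) (hM : 0 < M) {z : ℝ × ℝ}
    (hz : pushOff δ M z ∈ Complex.slitPlane) :
    jacDet (actionAngle ∘ pushOff δ M) z = 1 := by
  obtain ⟨L, hL, c, hL1, hL2⟩ := fderiv_pushOff hδ hM z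
  obtain ⟨K, hK, hKk⟩ := fderiv_actionAngle hz
  have hne := (zero_lt_one.trans_le (one_le_stretchDeriv hδ hM z.2)).ne'
  have hpi := Real.pi_ne_zero
  have hw : (pushOff δ M z).re ^ 2 + (pushOff δ M z).im ^ 2 ≠ 0 := by
    have := Complex.normSq_pos.2 (Complex.slitPlane_ne_zero hz)
    rw [Complex.normSq_apply] at this
    nlinarith
  rw [jacDet, (hK.comp z hL).fderiv]
  simp only [ContinuousLinearMap.comp_apply, hL1, hL2, hKk, Complex.ofReal_re, Complex.ofReal_im,
    Complex.add_re, Complex.add_im, Complex.re_ofReal_mul, Complex.im_ofReal_mul, Complex.I_re,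
    Complex.I_im]
  field_simp
  ring

/-- The slit is avoided: the compression at `v = 0` beats the shift `δ`. -/
lemma pushOff_mem_slitPlane {δ M : ℝ} (hδ : 0 < δ) (hM : 0 < M) {z : ℝ × ℝ}
    (hz : |z.1| < δ * (1 + δ * M)) : pushOff δ M z ∈ Complex.slitPlane := by
  rw [Complex.mem_slitPlane_iff, pushOff_re, pushOff_im]
  by_cases hv : z.2 = 0
  · left
    have hpos : 0 < 1 + δ * M := by positivity
    have h0 : stretchDeriv δ M z.2 = 1 + δ * M := by simp [stretchDeriv, hv]
    have h1 : -δ < z.1 / (1 + δ * M) := by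
      rw [lt_div_iff₀ hpos]
      linarith [neg_abs_le z.1]
    rw [h0, ← div_eq_mul_inv]
    linarith
  · right
    intro h
    apply hv
    apply (strictMono_stretch hδ hM).injective
    rw [h]; simp [stretch]

/-- The push-off moves points away from the origin by a controlled amount. -/
lemma action_pushOff_le {δ M r ε : ℝ} (hδ : 0 < δ) (hδ1 : δ ≤ 1) (hM : 0 < M)
    (hδε : δ * (Real.pi * (6 * r + 5)) ≤ ε) {z : ℝ × ℝ} (h1 : |z.1| ≤ r) (h2 : |z.2| ≤ r) :
    (actionAngle (pushOff δ M z)).1 ≤ Real.pi * (z.1 ^ 2 + z.2 ^ 2) + ε := by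
  have hs := one_le_stretchDeriv hδ hM z.2
  have hp : |z.1 * (stretchDeriv δ M z.2)⁻¹ + δ| ≤ |z.1| + δ := by
    refine (abs_add_le _ _).trans ?_
    rw [abs_mul, abs_of_pos hδ, abs_of_pos (inv_pos.2 (zero_lt_one.trans_le hs))]
    have := mul_le_mul_of_nonneg_left (inv_le_one_of_one_le₀ hs) (abs_nonneg z.1)
    linarith
  have hq := abs_stretch_le (M := M) hδ z.2
  have hp2 := pow_le_pow_left₀ (abs_nonneg _) hp 2
  have hq2 := pow_le_pow_left₀ (abs_nonneg _) hq 2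
  rw [sq_abs] at hp2 hq2
  have hu := sq_abs z.1
  have hv := sq_abs z.2
  simp only [actionAngle, pushOff_re, pushOff_im]
  have key : (z.1 * (stretchDeriv δ M z.2)⁻¹ + δ) ^ 2 + stretch δ M z.2 ^ 2 ≤
      z.1 ^ 2 + z.2 ^ 2 + δ * (6 * r + 5) := by
    nlinarith [mul_le_mul_of_nonneg_left h1 hδ.le, mul_le_mul_of_nonneg_left h2 hδ.le]
  have := mul_le_mul_of_nonneg_left key Real.pi_pos.le
  linarith

/-- (The two-dimensional content of Lemma 3.5 (i).)  There is an
area- and orientation-preserving smooth embedding `f` of the open disc `D` of area `a`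
into the rectangle `R = (0, a+ε) × (0,1)` such that `h_T ∘ f ≥ h_B`, where
`h_B(u,v) = a - π(u²+v²)` and `h_T(u,v) = a + ε - u`. -/
theorem statement14 (a ε : ℝ) (ha : 0 < a) (hε : 0 < ε) :
    ∃ f : ℝ × ℝ → ℝ × ℝ,
      ContDiffOn ℝ (⊤ : ℕ∞) f {z : ℝ × ℝ | Real.pi * (z.1^2 + z.2^2) < a} ∧
      Set.InjOn f {z : ℝ × ℝ | Real.pi * (z.1^2 + z.2^2) < a} ∧
      Set.MapsTo f {z : ℝ × ℝ | Real.pi * (z.1^2 + z.2^2) < a}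
        (Ioo (0:ℝ) (a + ε) ×ˢ Ioo (0:ℝ) 1) ∧
      (∀ z ∈ {z : ℝ × ℝ | Real.pi * (z.1^2 + z.2^2) < a}, jacDet f z = 1) ∧
      ∀ z ∈ {z : ℝ × ℝ | Real.pi * (z.1^2 + z.2^2) < a},
        a - Real.pi * (z.1^2 + z.2^2) ≤ a + ε - (f z).1 := by
  have hpi := Real.pi_pos
  -- `r = a + 1` is a convenient bound for the radius of the disc.
  obtain ⟨r, hr⟩ : ∃ r : ℝ, r = a + 1 := ⟨_, rfl⟩
  have hr0 : 0 < r := by linarith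
  have hC : 0 < Real.pi * (6 * r + 5) := by positivity
  obtain ⟨δ, hδ, hδ1, hδε⟩ :
      ∃ δ : ℝ, 0 < δ ∧ δ ≤ 1 ∧ δ * (Real.pi * (6 * r + 5)) ≤ ε := by
    refine ⟨min 1 (ε / (Real.pi * (6 * r + 5))), lt_min one_pos (by positivity),
      min_le_left _ _, ?_⟩
    rw [← le_div_iff₀ hC]
    exact min_le_right _ _
  -- With this `M`, the bound `δ * (1 + δ * M) = δ + r` exceeds `r`.
  obtain ⟨M, hM⟩ : ∃ M : ℝ, M = r / δ ^ 2 := ⟨_, rfl⟩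
  have hM0 : 0 < M := by rw [hM]; positivity
  have hMδ : δ * (1 + δ * M) = δ + r := by rw [hM]; field_simp
  have hbound : ∀ z : ℝ × ℝ, Real.pi * (z.1 ^ 2 + z.2 ^ 2) < a → |z.1| ≤ r ∧ |z.2| ≤ r := by
    intro z hz
    have h3 : z.1 ^ 2 + z.2 ^ 2 < a := by
      nlinarith [Real.pi_gt_three, sq_nonneg z.1, sq_nonneg z.2]
    have hr2 : a ≤ r ^ 2 := by rw [hr]; nlinarith
    exact ⟨abs_le_of_sq_le_sq (by nlinarith [sq_nonneg z.2]) hr0.le,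
      abs_le_of_sq_le_sq (by nlinarith [sq_nonneg z.1]) hr0.le⟩
  have hslit : ∀ z : ℝ × ℝ, Real.pi * (z.1 ^ 2 + z.2 ^ 2) < a →
      pushOff δ M z ∈ Complex.slitPlane := fun z hz =>
    pushOff_mem_slitPlane hδ hM0 (by rw [hMδ]; linarith [(hbound z hz).1])
  have hle : ∀ z : ℝ × ℝ, Real.pi * (z.1 ^ 2 + z.2 ^ 2) < a →
      (actionAngle (pushOff δ M z)).1 ≤ Real.pi * (z.1 ^ 2 + z.2 ^ 2) + ε := fun z hz =>
    action_pushOff_le hδ hδ1 hM0 hδε (hbound z hz).1 (hbound z hz).2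
  refine ⟨actionAngle ∘ pushOff δ M, ?_, ?_, ?_, ?_, ?_⟩
  · intro z hz
    exact ((contDiffAt_actionAngle (hslit z hz)).comp z
      (contDiff_pushOff hδ hM0).contDiffAt).contDiffWithinAt
  · exact (actionAngle_injective.comp (pushOff_injective hδ hM0)).injOn
  · intro z hz
    refine ⟨⟨?_, (hle z hz).trans_lt (by have : _ < a := hz; linarith)⟩,
      actionAngle_snd_mem (hslit z hz)⟩
    have := Complex.normSq_pos.2 (Complex.slitPlane_ne_zero (hslit z hz))
    rw [Complex.normSq_apply] at this
    exact mul_pos hpi (by nlinarith)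
  · exact fun z hz => jacDet_comp hδ hM0 (hslit z hz)
  · intro z hz
    have := hle z hz
    simp only [Function.comp_apply]
    linarith
end
end
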